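/- Any sequence (a_k*) of minimisers of the k-th Dirichlet biharmonic eigenvalue over rectangles of unit area satisfies limsup_{k→∞} a_k* ≤ (6√3/(3√3 − 2√2))·(1 + Γ(3/4)/(√π·Γ(5/4))); in particular the sequence (a_k*) is bounded. -/

import Mathlib

open MeasureTheory Real Filter

noncomputable section

/-- Directional (partial) derivative of `u : ℝ × ℝ → ℝ` in direction `v`. -/
def pd (v : ℝ × ℝ) (u : ℝ × ℝ → ℝ) : ℝ × ℝ → ℝ := fun p => fderiv ℝ u p v

/-- Second partial derivative `∂²u/∂x²`. -/
def uxx (u : ℝ × ℝ → ℝ) : ℝ × ℝ → ℝ := pd (1, 0) (pd (1, 0) u)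

/-- Second partial derivative `∂²u/∂y²`. -/
def uyy (u : ℝ × ℝ → ℝ) : ℝ × ℝ → ℝ := pd (0, 1) (pd (0, 1) u)

/-- Mixed second partial derivative `∂²u/∂x∂y`. -/
def uxy (u : ℝ × ℝ → ℝ) : ℝ × ℝ → ℝ := pd (0, 1) (pd (1, 0) u)

/-- The Laplacian `Δu = u_xx + u_yy`. -/
def lap (u : ℝ × ℝ → ℝ) : ℝ × ℝ → ℝ := fun p => uxx u p + uyy u p

/-- The open rectangle `R_a = (0,a) × (0,1/a)` of unit area. -/
def Rect (a : ℝ) : Set (ℝ × ℝ) := Set.Ioo 0 a ×ˢ Set.Ioo 0 (1 / a)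

/-- Admissible test functions: smooth, compactly supported inside `Ω`. -/
def Adm (Ω : Set (ℝ × ℝ)) (u : ℝ × ℝ → ℝ) : Prop :=
  ContDiff ℝ (⊤ : ℕ∞) u ∧ HasCompactSupport u ∧ tsupport u ⊆ Ω

/-- First Dirichlet eigenvalue of the biharmonic operator on `R_a`,
characterized variationally as the infimum of the Rayleigh quotient. -/
def lam1 (a : ℝ) : ℝ :=
  sInf { μ | ∃ u : ℝ × ℝ → ℝ, Adm (Rect a) u ∧ u ≠ 0 ∧
    μ = (∫ p, (lap u p) ^ 2) / (∫ p, (u p) ^ 2) }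

/-- `k`-th Dirichlet eigenvalue of the biharmonic operator on `R_a`:
infimum over linearly independent `k`-tuples of admissible functions of the
maximum of the Rayleigh quotient over nonzero linear combinations. -/
def lamk (k : ℕ) (a : ℝ) : ℝ :=
  sInf { μ | ∃ u : Fin k → (ℝ × ℝ → ℝ), (∀ i, Adm (Rect a) (u i)) ∧
    LinearIndependent ℝ u ∧
    μ = sSup { r | ∃ c : Fin k → ℝ, c ≠ 0 ∧
      r = (∫ p, (lap (fun q => ∑ i, c i * u i q) p) ^ 2) /
          (∫ p, (∑ i, c i * u i p) ^ 2) } }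

/-- Area of the quarter disc of radius `x`. -/
lemma integral_quarter_circle {x : ℝ} (hx : 0 ≤ x) :
    ∫ t in (0 : ℝ)..x, √(x ^ 2 - t ^ 2) = π * x ^ 2 / 4 := by
  have hcont : Continuous fun t : ℝ => √(1 - t ^ 2) := by fun_prop
  have h1 : ∫ t in (0 : ℝ)..1, √(1 - t ^ 2) = π / 4 := by
    have h := integral_sqrt_one_sub_sq
    rw [← intervalIntegral.integral_add_adjacent_intervals (b := 0)
      (hcont.intervalIntegrable _ _) (hcont.intervalIntegrable _ _)] at h
    have h2 : ∫ t in (-1 : ℝ)..0, √(1 - t ^ 2) = ∫ t in (0 : ℝ)..1, √(1 - t ^ 2) := by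
      have := intervalIntegral.integral_comp_neg (a := 0) (b := 1) (fun t : ℝ => √(1 - t ^ 2))
      simpa using this.symm
    linarith
  have h3 := intervalIntegral.mul_integral_comp_mul_left (a := 0) (b := 1)
    (f := fun t : ℝ => √(x ^ 2 - t ^ 2)) x
  simp only [mul_zero, mul_one] at h3
  rw [← h3]
  have h4 : ∀ t : ℝ, √(x ^ 2 - (x * t) ^ 2) = x * √(1 - t ^ 2) := fun t => by
    rw [show x ^ 2 - (x * t) ^ 2 = x ^ 2 * (1 - t ^ 2) by ring, Real.sqrt_mul (sq_nonneg x),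
      Real.sqrt_sq hx]
  simp_rw [h4]
  rw [intervalIntegral.integral_const_mul, h1]
  ring

/-- The chord of the circular arc lies below the arc. -/
lemma circle_chord_le {x p q s : ℝ} (hp : p ^ 2 ≤ x ^ 2) (hq : q ^ 2 ≤ x ^ 2) (h0 : 0 ≤ s)
    (h1 : s ≤ 1) :
    (1 - s) * √(x ^ 2 - p ^ 2) + s * √(x ^ 2 - q ^ 2)
      ≤ √(x ^ 2 - ((1 - s) * p + s * q) ^ 2) := by
  apply Real.le_sqrt_of_sq_le
  have hA := Real.sq_sqrt (sub_nonneg.2 hp)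
  have hB := Real.sq_sqrt (sub_nonneg.2 hq)
  set A := √(x ^ 2 - p ^ 2)
  set B := √(x ^ 2 - q ^ 2)
  have : 0 ≤ s * (1 - s) := mul_nonneg h0 (by linarith)
  nlinarith [mul_nonneg this (sq_nonneg (A - B)), mul_nonneg this (sq_nonneg (p - q))]

lemma circle_trapezoid_le {x n : ℝ} (hn : 0 ≤ n) (hx : n + 1 ≤ x) :
    (√(x ^ 2 - n ^ 2) + √(x ^ 2 - (n + 1) ^ 2)) / 2 ≤ ∫ t in n..(n + 1), √(x ^ 2 - t ^ 2) := by
  have h1 : ∫ s in (0 : ℝ)..1, ((1 - s) * √(x ^ 2 - n ^ 2) + s * √(x ^ 2 - (n + 1) ^ 2))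
      = (√(x ^ 2 - n ^ 2) + √(x ^ 2 - (n + 1) ^ 2)) / 2 := by
    rw [intervalIntegral.integral_add (by apply Continuous.intervalIntegrable; fun_prop)
      (by apply Continuous.intervalIntegrable; fun_prop),
      intervalIntegral.integral_mul_const, intervalIntegral.integral_mul_const,
      intervalIntegral.integral_sub (by simp) (by simp)]
    simp
    ring
  have h2 := intervalIntegral.integral_comp_add_left (a := 0) (b := 1)
    (fun t : ℝ => √(x ^ 2 - t ^ 2)) n
  simp only [add_zero] at h2
  rw [← h1, ← h2]
  apply intervalIntegral.integral_mono_on (by norm_num)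
    (by apply Continuous.intervalIntegrable; fun_prop)
    (by apply Continuous.intervalIntegrable; fun_prop)
  intro s hs
  have := circle_chord_le (x := x) (p := n) (q := n + 1) (s := s) (by nlinarith) (by nlinarith)
    hs.1 hs.2
  convert this using 4
  ring

lemma circle_integral_le_midpoint {x n : ℝ} (hn : 0 ≤ n) (hx : n + 1 ≤ x) :
    ∫ t in (n - 1 / 2)..(n + 1 / 2), √(x ^ 2 - t ^ 2) ≤ √(x ^ 2 - n ^ 2) := by
  have hpos : 0 < x ^ 2 - n ^ 2 := by nlinarith
  have hs := Real.sqrt_pos.2 hpos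
  have hsq := Real.sq_sqrt hpos.le
  set g := √(x ^ 2 - n ^ 2)
  have h1 : ∫ t in (n - 1 / 2)..(n + 1 / 2), (x ^ 2 - n * t) / g = g := by
    rw [intervalIntegral.integral_div, intervalIntegral.integral_sub (by simp)
      (by apply Continuous.intervalIntegrable; fun_prop), intervalIntegral.integral_const,
      intervalIntegral.integral_const_mul, integral_id, div_eq_iff hs.ne', smul_eq_mul]
    nlinarith
  rw [← h1]
  apply intervalIntegral.integral_mono_on (by linarith)
    (by apply Continuous.intervalIntegrable; fun_prop)
    (by apply Continuous.intervalIntegrable; fun_prop)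
  intro t ht
  rw [le_div_iff₀ hs]
  rcases le_total (x ^ 2 - t ^ 2) 0 with h | h
  · rw [Real.sqrt_eq_zero_of_nonpos h]
    nlinarith [ht.1, ht.2]
  · have h2 := Real.sq_sqrt h
    have : 0 ≤ x ^ 2 - n * t := by nlinarith [ht.1, ht.2]
    apply le_of_sq_le_sq _ this
    rw [mul_pow, h2, hsq]
    nlinarith [mul_nonneg (sq_nonneg x) (sq_nonneg (n - t))]

/-- The sum `∑_{1 ≤ n ≤ x} √(x² - n²)`. -/
def circleSum (x : ℝ) : ℝ := ∑ n ∈ Finset.range ⌊x⌋₊, √(x ^ 2 - ((n : ℝ) + 1) ^ 2)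

lemma sum_trapezoid_le {x : ℝ} (N : ℕ) (hN : (N : ℝ) ≤ x) :
    ∑ n ∈ Finset.range N, √(x ^ 2 - ((n : ℝ) + 1) ^ 2)
      ≤ (∫ t in (0 : ℝ)..N, √(x ^ 2 - t ^ 2)) - (x - √(x ^ 2 - (N : ℝ) ^ 2)) / 2 := by
  have hx : 0 ≤ x := le_trans (by positivity) hN
  induction N with
  | zero => simp [Real.sqrt_sq hx]
  | succ N ih =>
    push_cast at hN ⊢
    have h1 := ih (by linarith)
    have h2 := circle_trapezoid_le (x := x) (n := N) (by positivity) hN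
    rw [Finset.sum_range_succ, ← intervalIntegral.integral_add_adjacent_intervals (b := (N : ℝ))
      (by apply Continuous.intervalIntegrable; fun_prop)
      (by apply Continuous.intervalIntegrable; fun_prop)]
    linarith

lemma circleSum_le {x : ℝ} (hx : 0 ≤ x) :
    circleSum x ≤ π * x ^ 2 / 4 - (x - √(x ^ 2 - (⌊x⌋₊ : ℝ) ^ 2)) / 2 := by
  have hfl := Nat.floor_le hx
  refine (sum_trapezoid_le _ hfl).trans ?_
  rw [← integral_quarter_circle hx]
  have : ∫ t in (0 : ℝ)..⌊x⌋₊, √(x ^ 2 - t ^ 2) ≤ ∫ t in (0 : ℝ)..x, √(x ^ 2 - t ^ 2) := by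
    rw [← intervalIntegral.integral_add_adjacent_intervals (b := (⌊x⌋₊ : ℝ)) (c := x)
      (by apply Continuous.intervalIntegrable; fun_prop)
      (by apply Continuous.intervalIntegrable; fun_prop)]
    have := intervalIntegral.integral_nonneg (μ := volume)
      (f := fun t : ℝ => √(x ^ 2 - t ^ 2)) hfl
      (fun t _ => Real.sqrt_nonneg _)
    simpa using this
  linarith

lemma integral_le_sum_midpoint {x : ℝ} (N : ℕ) (hN : (N : ℝ) + 1 ≤ x) :
    ∫ t in (1 / 2 : ℝ)..(N + 1 / 2), √(x ^ 2 - t ^ 2)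
      ≤ ∑ n ∈ Finset.range N, √(x ^ 2 - ((n : ℝ) + 1) ^ 2) := by
  induction N with
  | zero => simp
  | succ N ih =>
    push_cast at hN ⊢
    have h1 := ih (by linarith)
    have h2 := circle_integral_le_midpoint (x := x) (n := N + 1) (by positivity) hN
    rw [Finset.sum_range_succ, ← intervalIntegral.integral_add_adjacent_intervals
      (b := (N + 1 / 2 : ℝ))
      (by apply Continuous.intervalIntegrable; fun_prop)
      (by apply Continuous.intervalIntegrable; fun_prop)]
    rw [show (N + 1 - 1 / 2 : ℝ) = N + 1 / 2 by ring] at h2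
    linarith

lemma circle_integral_le_mul {x a b C : ℝ} (hab : a ≤ b)
    (h : ∀ t ∈ Set.Icc a b, x ^ 2 - t ^ 2 ≤ C ^ 2) (hC : 0 ≤ C) :
    ∫ t in a..b, √(x ^ 2 - t ^ 2) ≤ (b - a) * C := by
  have := intervalIntegral.integral_mono_on hab
    (f := fun t : ℝ => √(x ^ 2 - t ^ 2)) (g := fun _ => C) (μ := volume)
    (by apply Continuous.intervalIntegrable; fun_prop) (by simp)
    (fun t ht => (Real.sqrt_le_sqrt (h t ht)).trans_eq (Real.sqrt_sq hC))
  simpa using this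

lemma le_circleSum {x : ℝ} (hx : 1 ≤ x) :
    π * x ^ 2 / 4 - x / 2 - 3 * √x ≤ circleSum x := by
  obtain ⟨N, hN⟩ : ∃ N, ⌊x⌋₊ = N + 1 := Nat.exists_eq_add_one.2 (Nat.floor_pos.2 hx)
  have hfl := Nat.floor_le (zero_le_one.trans hx)
  have hfl' := Nat.lt_floor_add_one x
  rw [hN] at hfl hfl'
  push_cast at hfl hfl'
  have h1 := integral_le_sum_midpoint N hfl
  have h2 : ∑ n ∈ Finset.range N, √(x ^ 2 - ((n : ℝ) + 1) ^ 2) ≤ circleSum x := by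
    rw [circleSum, hN, Finset.sum_range_succ]
    linarith [Real.sqrt_nonneg (x ^ 2 - ((N : ℝ) + 1) ^ 2)]
  have h3 := integral_quarter_circle (zero_le_one.trans hx)
  rw [← intervalIntegral.integral_add_adjacent_intervals (b := (1 / 2 : ℝ))
      (by apply Continuous.intervalIntegrable; fun_prop)
      (by apply Continuous.intervalIntegrable; fun_prop),
      ← intervalIntegral.integral_add_adjacent_intervals (a := (1 / 2 : ℝ)) (b := (N + 1 / 2 : ℝ))
      (by apply Continuous.intervalIntegrable; fun_prop)
      (by apply Continuous.intervalIntegrable; fun_prop)] at h3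
  have h4 := circle_integral_le_mul (x := x) (a := 0) (b := 1 / 2) (C := x) (by norm_num)
    (fun t _ => by nlinarith [sq_nonneg t]) (by linarith)
  have hs := Real.sq_sqrt (zero_le_one.trans hx)
  have h5 := circle_integral_le_mul (x := x) (a := N + 1 / 2) (b := x) (C := 2 * √x)
    (by linarith)
    (fun t ht => by
      rw [mul_pow, hs]
      have : (0 : ℝ) ≤ N := by positivity
      nlinarith [ht.1, ht.2]) (by positivity)
  have : (x - (N + 1 / 2)) * (2 * √x) ≤ 3 / 2 * (2 * √x) := by
    apply mul_le_mul_of_nonneg_right _ (by positivity)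
    linarith
  linarith

lemma exists_finset_under_graph (N : ℕ) (f : ℕ → ℕ) :
    ∃ E : Finset (ℕ × ℕ), E.card = ∑ n ∈ Finset.range N, f n ∧
      ∀ p, p ∈ E ↔ p.2 < N ∧ p.1 < f p.2 := by
  refine ⟨((Finset.range N).sigma fun n => Finset.range (f n)).map
    ⟨fun s => (s.2, s.1), ?_⟩, by simp, fun p => ?_⟩
  · rintro ⟨a, b⟩ ⟨c, d⟩ h
    simp only [Prod.mk.injEq] at h
    obtain ⟨rfl, rfl⟩ := h
    rfl
  · rcases p with ⟨m, n⟩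
    simp only [Finset.mem_map, Finset.mem_sigma, Finset.mem_range]
    constructor
    · rintro ⟨s, hs, h⟩
      obtain ⟨rfl, rfl⟩ := Prod.mk.inj h
      exact hs
    · intro h
      exact ⟨⟨n, m⟩, h, rfl⟩

/-- Lattice points of low frequency for the rectangle `R_a`, counted from above. -/
lemma exists_lowFrequency_finset {a R : ℝ} (ha : 0 < a) (hR : 0 ≤ R) :
    ∃ E : Finset (ℕ × ℕ), (E.card : ℝ) ≤ a ^ 2 * circleSum (R / a) ∧
      ∀ p ∉ E, R ^ 2 ≤ (((p.1 : ℝ) + 1) / a) ^ 2 + (((p.2 : ℝ) + 1) * a) ^ 2 := by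
  obtain ⟨E, hcard, hmem⟩ := exists_finset_under_graph ⌊R / a⌋₊
    (fun n => ⌊a ^ 2 * √((R / a) ^ 2 - ((n : ℝ) + 1) ^ 2)⌋₊)
  refine ⟨E, ?_, fun p hp => ?_⟩
  · rw [hcard, circleSum, Finset.mul_sum]
    push_cast
    exact Finset.sum_le_sum fun n _ => Nat.floor_le (by positivity)
  · by_contra! hlt
    apply hp
    have hx : (R / a) ^ 2 = R ^ 2 / a ^ 2 := div_pow _ _ _
    have h2 : ((p.2 : ℝ) + 1) * a ≤ R := by
      apply le_of_sq_le_sq _ hR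
      nlinarith [sq_nonneg (((p.1 : ℝ) + 1) / a)]
    have h1 : (p.1 : ℝ) + 1 ≤ a ^ 2 * √((R / a) ^ 2 - ((p.2 : ℝ) + 1) ^ 2) := by
      rw [← div_le_iff₀' (by positivity)]
      apply Real.le_sqrt_of_sq_le
      have : (((p.1 : ℝ) + 1) / a ^ 2) ^ 2 = (((p.1 : ℝ) + 1) / a) ^ 2 / a ^ 2 := by
        field_simp
      rw [this, hx, le_sub_iff_add_le, div_add' _ _ _ (by positivity)]
      gcongr
      nlinarith
    rw [hmem]
    constructor
    · apply Nat.le_floor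
      push_cast
      rwa [le_div_iff₀ ha]
    · apply Nat.le_floor
      push_cast
      exact h1

/-- Indices of trial functions on the unit square, counted from below. -/
lemma exists_trial_finset {r : ℝ} (hr : 1 ≤ r) :
    ∃ I : Finset (ℕ × ℕ), circleSum r - 3 * r ≤ I.card ∧
      ∀ p ∈ I, ((p.1 : ℝ) + 2) ^ 2 + ((p.2 : ℝ) + 2) ^ 2 ≤ r ^ 2 := by
  obtain ⟨N, hN⟩ : ∃ N, ⌊r⌋₊ = N + 1 := Nat.exists_eq_add_one.2 (Nat.floor_pos.2 hr)
  have hfl := Nat.floor_le (zero_le_one.trans hr)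
  rw [hN] at hfl
  push_cast at hfl
  obtain ⟨I, hcard, hmem⟩ := exists_finset_under_graph N
    (fun n => ⌊√(r ^ 2 - ((n : ℝ) + 2) ^ 2)⌋₊ - 1)
  refine ⟨I, ?_, fun p hp => ?_⟩
  · rw [hcard, circleSum, hN, Finset.sum_range_succ']
    push_cast
    have h1 : ∑ n ∈ Finset.range N, (√(r ^ 2 - ((n : ℝ) + 1 + 1) ^ 2) - 2)
        ≤ ∑ n ∈ Finset.range N, ((⌊√(r ^ 2 - ((n : ℝ) + 2) ^ 2)⌋₊ - 1 : ℕ) : ℝ) := by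
      refine Finset.sum_le_sum fun n _ => ?_
      have h1 := Nat.lt_floor_add_one (√(r ^ 2 - ((n : ℝ) + 2) ^ 2))
      have h2 : (⌊√(r ^ 2 - ((n : ℝ) + 2) ^ 2)⌋₊ : ℝ)
          ≤ ((⌊√(r ^ 2 - ((n : ℝ) + 2) ^ 2)⌋₊ - 1 : ℕ) : ℝ) + 1 := by
        exact_mod_cast (by omega)
      rw [show (n : ℝ) + 1 + 1 = n + 2 by ring]
      linarith
    rw [Finset.sum_sub_distrib] at h1
    simp only [Finset.sum_const, Finset.card_range, nsmul_eq_mul] at h1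
    have h2 : √(r ^ 2 - (((0 : ℕ) : ℝ) + 1) ^ 2) ≤ r := by
      apply Real.sqrt_le_iff.2 ⟨by linarith, by simp⟩
    push_cast at h2
    linarith
  · obtain ⟨-, h⟩ := (hmem p).1 hp
    have h1 : ((p.1 + 2 : ℕ) : ℝ) ≤ √(r ^ 2 - ((p.2 : ℝ) + 2) ^ 2) := by
      apply (Nat.le_floor_iff (Real.sqrt_nonneg _)).1
      omega
    push_cast at h1
    have := (Real.le_sqrt' (by positivity)).1 h1
    linarith

lemma const_bound : (7.1 : ℝ) ≤ (6 * Real.sqrt 3 / (3 * Real.sqrt 3 - 2 * Real.sqrt 2)) *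
        (1 + Real.Gamma (3 / 4) / (Real.sqrt π * Real.Gamma (5 / 4))) := by
  have hG : ∀ s t : ℝ, 0 < s → 0 < t →
      Real.Gamma ((s + t) / 2) ^ 2 ≤ Real.Gamma s * Real.Gamma t := fun s t hs ht => by
    have h := Real.Gamma_mul_add_mul_le_rpow_Gamma_mul_rpow_Gamma hs ht
      (a := 1 / 2) (b := 1 / 2) (by norm_num) (by norm_num) (by norm_num)
    rw [← Real.sqrt_eq_rpow, ← Real.sqrt_eq_rpow,
      ← Real.sqrt_mul (Real.Gamma_pos_of_pos hs).le] at h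
    rw [show (s + t) / 2 = 1 / 2 * s + 1 / 2 * t by ring]
    have hp : 0 ≤ Real.Gamma (1 / 2 * s + 1 / 2 * t) :=
      (Real.Gamma_pos_of_pos (by positivity)).le
    exact (Real.le_sqrt' (Real.Gamma_pos_of_pos (by positivity))).1 h
  have h1 := hG (3 / 4) (5 / 4) (by norm_num) (by norm_num)
  have h2 := hG 1 (3 / 2) (by norm_num) (by norm_num)
  have h3 : Real.Gamma (3 / 2) = √π / 2 := by
    rw [show (3 / 2 : ℝ) = 1 / 2 + 1 by norm_num, Real.Gamma_add_one (by norm_num),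
      Real.Gamma_one_half_eq]
    ring
  norm_num at h1 h2
  rw [h3] at h2
  have hA : 0 < Real.Gamma (3 / 4) := Real.Gamma_pos_of_pos (by norm_num)
  have hB : 0 < Real.Gamma (5 / 4) := Real.Gamma_pos_of_pos (by norm_num)
  have hpi : 0 < √π := Real.sqrt_pos.2 Real.pi_pos
  have hpisq : √π ^ 2 = π := Real.sq_sqrt Real.pi_pos.le
  have hq : (0.636 : ℝ) ≤ Real.Gamma (3 / 4) / (Real.sqrt π * Real.Gamma (5 / 4)) := by
    have hpi4 : π < 3.1416 := Real.pi_lt_d4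
    rw [le_div_iff₀ (by positivity)]
    have h4 : 0.636 * (√π * Real.Gamma (5 / 4)) * Real.Gamma (5 / 4) ≤ 1 := by
      nlinarith
    by_contra! hlt
    have := mul_lt_mul_of_pos_right hlt hB
    linarith
  have h2sq : √2 ^ 2 = (2 : ℝ) := Real.sq_sqrt (by norm_num)
  have h3sq : √3 ^ 2 = (3 : ℝ) := Real.sq_sqrt (by norm_num)
  have hs2 : (1.4142 : ℝ) ≤ √2 := Real.le_sqrt_of_sq_le (by norm_num)
  have hs2' : √2 ≤ (1.4143 : ℝ) := Real.sqrt_le_iff.2 ⟨by norm_num, by norm_num⟩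
  have hs3 : (1.732 : ℝ) ≤ √3 := Real.le_sqrt_of_sq_le (by norm_num)
  have hs3' : √3 ≤ (1.7321 : ℝ) := Real.sqrt_le_iff.2 ⟨by norm_num, by norm_num⟩
  have hc : (4.38 : ℝ) ≤ 6 * Real.sqrt 3 / (3 * Real.sqrt 3 - 2 * Real.sqrt 2) := by
    rw [le_div_iff₀ (by linarith)]
    linarith
  calc (7.1 : ℝ) ≤ 4.38 * (1 + 0.636) := by norm_num
    _ ≤ _ := by gcongr

/-- A uniform two-term gain for rectangles with side at least `7.1`. -/
lemma card_bound {a R : ℝ} (ha : 7.1 ≤ a) (hR : 1200000 ≤ R) :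
    a ^ 2 * circleSum (R / a) ≤ max 0 (π * R ^ 2 / 4 - 3.5145 * R) := by
  have ha0 : 0 < a := by linarith
  set x := R / a with hxdef
  have hRx : R = a * x := by rw [hxdef]; field_simp
  rcases lt_or_ge x 1 with hx | hx
  · apply le_max_of_le_left
    rw [circleSum, Nat.floor_eq_zero.2 hx]
    simp
  apply le_max_of_le_right
  have h := circleSum_le (zero_le_one.trans hx)
  have hfl := Nat.floor_le (zero_le_one.trans hx)
  have hfl' := Nat.lt_floor_add_one x
  have hfl1 : (1 : ℝ) ≤ ⌊x⌋₊ := by exact_mod_cast Nat.floor_pos.2 hx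
  suffices hgain : 3.5145 * R ≤ a ^ 2 * ((x - √(x ^ 2 - (⌊x⌋₊ : ℝ) ^ 2)) / 2) by
    have := mul_le_mul_of_nonneg_left h (sq_nonneg a)
    have e : a ^ 2 * (π * x ^ 2 / 4) = π * R ^ 2 / 4 := by rw [hRx]; ring
    linarith
  rw [hRx, show 3.5145 * (a * x) = a * (3.5145 * x) by ring, sq, mul_assoc]
  apply mul_le_mul_of_nonneg_left _ ha0.le
  rcases le_total a 60 with h60 | h60
  · have hxl : 20000 ≤ x := by
      rw [hxdef, le_div_iff₀ ha0]
      nlinarith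
    have : √(x ^ 2 - (⌊x⌋₊ : ℝ) ^ 2) ≤ 0.01 * x := by
      apply Real.sqrt_le_iff.2 ⟨by positivity, ?_⟩
      nlinarith
    nlinarith
  · have : √(x ^ 2 - (⌊x⌋₊ : ℝ) ^ 2) ≤ 0.8661 * x := by
      apply Real.sqrt_le_iff.2 ⟨by positivity, ?_⟩
      have : x / 2 ≤ ⌊x⌋₊ := by linarith
      nlinarith
    nlinarith

lemma trial_bound {r : ℝ} (hr : 1000000 ≤ r) :
    π * r ^ 2 / 4 - 3.51 * r ≤ circleSum r - 3 * r := by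
  have h := le_circleSum (x := r) (by linarith)
  have : √r ≤ 0.001 * r := by
    apply Real.sqrt_le_iff.2 ⟨by positivity, ?_⟩
    nlinarith
  linarith

lemma exists_radius {K : ℝ} (hK : 10 ^ 13 ≤ K) :
    ∃ r : ℝ, 1200000 ≤ r ∧ π * r ^ 2 / 4 - 3.51 * r = K := by
  have hs := Real.sq_sqrt (show 0 ≤ 3.51 ^ 2 + π * K by positivity)
  have hp := Real.pi_gt_three
  have hp' := Real.pi_lt_d2
  set s := √(3.51 ^ 2 + π * K)
  refine ⟨2 * (3.51 + s) / π, ?_, ?_⟩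
  · have : (5000000 : ℝ) ≤ s := by
      apply Real.le_sqrt_of_sq_le
      nlinarith
    rw [le_div_iff₀ Real.pi_pos]
    nlinarith
  · field_simp
    nlinarith

lemma Adm.pd {Ω : Set (ℝ × ℝ)} {u : ℝ × ℝ → ℝ} (h : Adm Ω u) (v : ℝ × ℝ) : Adm Ω (pd v u) := by
  obtain ⟨h1, h2, h3⟩ := h
  refine ⟨?_, h2.fderiv_apply ℝ v, (tsupport_fderiv_apply_subset ℝ v).trans h3⟩
  exact (h1.fderiv_right (by simp)).clm_apply contDiff_const

lemma Adm.add {Ω : Set (ℝ × ℝ)} {u w : ℝ × ℝ → ℝ} (hu : Adm Ω u) (hw : Adm Ω w) :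
    Adm Ω (fun p => u p + w p) :=
  ⟨hu.1.add hw.1, hu.2.1.add hw.2.1, (tsupport_add u w).trans (Set.union_subset hu.2.2 hw.2.2)⟩

lemma Adm.lap {Ω : Set (ℝ × ℝ)} {u : ℝ × ℝ → ℝ} (h : Adm Ω u) : Adm Ω (lap u) :=
  ((h.pd _).pd _).add ((h.pd _).pd _)

lemma Adm.const_mul {Ω : Set (ℝ × ℝ)} {u : ℝ × ℝ → ℝ} (h : Adm Ω u) (c : ℝ) :
    Adm Ω (fun p => c * u p) :=
  ⟨contDiff_const.mul h.1, h.2.1.mul_left, (tsupport_mul_subset_right (f := fun _ => c)).trans h.2.2⟩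

lemma Adm.sum {ι : Type*} {Ω : Set (ℝ × ℝ)} {u : ι → ℝ × ℝ → ℝ} (h : ∀ i, Adm Ω (u i))
    (c : ι → ℝ) (s : Finset ι) : Adm Ω (fun p => ∑ i ∈ s, c i * u i p) := by
  classical
  induction s using Finset.induction_on with
  | empty => exact ⟨by simpa using contDiff_const, HasCompactSupport.intro isCompact_empty (by simp),
      by simp [tsupport]⟩
  | insert i s hi ih =>
    simp_rw [Finset.sum_insert hi]
    exact ((h i).const_mul (c i)).add ih

lemma pd_sum {ι : Type*} (s : Finset ι) {u : ι → ℝ × ℝ → ℝ} (v : ℝ × ℝ)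
    (h : ∀ i, Differentiable ℝ (u i)) (c : ι → ℝ) :
    pd v (fun p => ∑ i ∈ s, c i * u i p) = fun p => ∑ i ∈ s, c i * pd v (u i) p := by
  funext p
  simp only [pd]
  rw [fderiv_fun_sum (fun i _ => ((h i) p).const_mul (c i))]
  simp only [sum_apply]
  refine Finset.sum_congr rfl fun i _ => ?_
  rw [fderiv_const_mul ((h i) p)]
  rfl

lemma Adm.differentiable {Ω : Set (ℝ × ℝ)} {u : ℝ × ℝ → ℝ} (h : Adm Ω u) : Differentiable ℝ u :=
  h.1.differentiable (by simp)

lemma Adm.continuous {Ω : Set (ℝ × ℝ)} {u : ℝ × ℝ → ℝ} (h : Adm Ω u) : Continuous u :=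
  h.1.continuous

lemma lap_sum {ι : Type*} {Ω : Set (ℝ × ℝ)} (s : Finset ι) {u : ι → ℝ × ℝ → ℝ}
    (h : ∀ i, Adm Ω (u i)) (c : ι → ℝ) :
    lap (fun p => ∑ i ∈ s, c i * u i p) = fun p => ∑ i ∈ s, c i * lap (u i) p := by
  funext p
  simp only [lap, uxx, uyy, mul_add, Finset.sum_add_distrib]
  rw [pd_sum s _ fun i => (h i).differentiable, pd_sum s _ fun i => ((h i).pd _).differentiable,
    pd_sum s _ fun i => (h i).differentiable, pd_sum s _ fun i => ((h i).pd _).differentiable]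

lemma Adm.integrable_mul {Ω : Set (ℝ × ℝ)} {u : ℝ × ℝ → ℝ} (h : Adm Ω u) {g : ℝ × ℝ → ℝ}
    (hg : Continuous g) : Integrable (fun p => u p * g p) :=
  (h.continuous.mul hg).integrable_of_hasCompactSupport h.2.1.mul_right

lemma Adm.integral_pd_mul {Ω : Set (ℝ × ℝ)} {u : ℝ × ℝ → ℝ} (h : Adm Ω u) {g : ℝ × ℝ → ℝ}
    (hg : ContDiff ℝ (⊤ : ℕ∞) g) (v : ℝ × ℝ) :
    ∫ p, _root_.pd v u p * g p = - ∫ p, u p * _root_.pd v g p := by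
  have hg' : Continuous (_root_.pd v g) := (hg.continuous_fderiv (by simp)).clm_apply continuous_const
  have := integral_mul_fderiv_eq_neg_fderiv_mul_of_integrable (μ := volume) (f := u) (g := g)
    (v := v) ((h.pd v).integrable_mul hg.continuous) (h.integrable_mul hg')
    (h.integrable_mul hg.continuous) (fun x _ => h.differentiable x)
    (fun x _ => hg.differentiable (by simp) x)
  simp only [_root_.pd]
  rw [this, neg_neg]

lemma Adm.integral_lap_mul {Ω : Set (ℝ × ℝ)} {u : ℝ × ℝ → ℝ} (h : Adm Ω u) {g : ℝ × ℝ → ℝ}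
    (hg : ContDiff ℝ (⊤ : ℕ∞) g) :
    ∫ p, _root_.lap u p * g p = ∫ p, u p * _root_.lap g p := by
  have hpd' : ∀ {g : ℝ × ℝ → ℝ} (v : ℝ × ℝ), ContDiff ℝ (⊤ : ℕ∞) g →
      ContDiff ℝ (⊤ : ℕ∞) (_root_.pd v g) := fun v hg =>
    (hg.fderiv_right (by simp)).clm_apply contDiff_const
  have hpd : ∀ v, ContDiff ℝ (⊤ : ℕ∞) (_root_.pd v g) := fun v => hpd' v hg
  simp only [_root_.lap, uxx, uyy, add_mul, mul_add]
  rw [integral_add (((h.pd _).pd _).integrable_mul hg.continuous)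
    (((h.pd _).pd _).integrable_mul hg.continuous),
    integral_add (h.integrable_mul (hpd' _ (hpd _)).continuous)
      (h.integrable_mul (hpd' _ (hpd _)).continuous),
    (h.pd _).integral_pd_mul hg, (h.pd _).integral_pd_mul hg, h.integral_pd_mul (hpd _),
    h.integral_pd_mul (hpd _), neg_neg, neg_neg]

/-- Laplacian of a tensor product of one-variable functions. -/
lemma lap_tensor {f g : ℝ → ℝ} {f' g' : ℝ → ℝ} {f'' g'' : ℝ → ℝ} (hf : ∀ x, HasDerivAt f (f' x) x)
    (hf' : ∀ x, HasDerivAt f' (f'' x) x) (hg : ∀ x, HasDerivAt g (g' x) x)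
    (hg' : ∀ x, HasDerivAt g' (g'' x) x) :
    lap (fun p => f p.1 * g p.2) = fun p => f'' p.1 * g p.2 + f p.1 * g'' p.2 := by
  have key : ∀ {f g f' g' : ℝ → ℝ}, (∀ x, HasDerivAt f (f' x) x) → (∀ x, HasDerivAt g (g' x) x) →
      ∀ v : ℝ × ℝ, pd v (fun p => f p.1 * g p.2)
        = fun p => v.1 * (f' p.1 * g p.2) + v.2 * (f p.1 * g' p.2) := by
    intro f g f' g' hf hg v
    funext p
    have h := ((hf p.1).comp_hasFDerivAt p (ContinuousLinearMap.fst ℝ ℝ ℝ).hasFDerivAt).mul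
      ((hg p.2).comp_hasFDerivAt p (ContinuousLinearMap.snd ℝ ℝ ℝ).hasFDerivAt)
    have h2 : HasFDerivAt (fun p : ℝ × ℝ => f p.1 * g p.2) _ p := h
    simp only [pd, h2.fderiv]
    simp
    ring
  funext p
  simp only [lap, uxx, uyy]
  rw [key hf hg, key hf hg]
  simp only [one_mul, zero_mul, add_zero, zero_add]
  rw [key hf' hg, key hf hg']
  simp

/-- The coefficients of the odd extension of `f` are sine coefficients. -/
lemma fourierCoeffOn_odd {L : ℝ} (hL : 0 < L) {f : ℝ → ℝ} (hf : Continuous f) (n : ℤ) :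
    fourierCoeffOn (show -L < L by linarith)
        (fun x => if 0 < x then (f x : ℂ) else -(f (-x) : ℂ)) n
      = -(Complex.I / L) * ((∫ x in (0 : ℝ)..L, f x * Real.sin (n * π * x / L) : ℝ) : ℂ) := by
  rw [fourierCoeffOn_eq_integral]
  set F : ℝ → ℂ := fun x => if 0 < x then (f x : ℂ) else -(f (-x) : ℂ) with hF
  set e : ℝ → ℂ := fun x => Complex.exp (-(n * π * x / L * Complex.I)) with he
  have hexp : ∀ x : ℝ, fourier (-n) (x : AddCircle (L - -L)) • F x = e x * F x := fun x => by
    rw [fourier_coe_apply, smul_eq_mul, he]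
    congr 2
    push_cast
    have : (L : ℂ) ≠ 0 := by exact_mod_cast hL.ne'
    field_simp
    ring
  refine (congrArg (fun z => (1 / (L - -L)) • z) (intervalIntegral.integral_congr
    (g := fun x => e x * F x) fun x _ => hexp x)).trans ?_
  have hec : Continuous e := by fun_prop
  have hfc : Continuous fun x => (f x : ℂ) := Complex.continuous_ofReal.comp hf
  have hpos : ∀ x ∈ Set.Ioc (0 : ℝ) L, e x * F x = e x * f x := fun x hx => by
    simp only [hF, if_pos hx.1]
  have hneg : ∀ x ∈ Set.Ioc (-L) (0 : ℝ), e x * F x = -(e x * f (-x)) := fun x hx => by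
    simp only [hF, if_neg (not_lt.2 hx.2)]
    ring
  have i1 : IntervalIntegrable (fun x => e x * F x) volume 0 L := by
    apply ((hec.mul hfc).intervalIntegrable 0 L).congr
    rw [Set.uIoc_of_le hL.le]
    exact fun x hx => (hpos x hx).symm
  have i2 : IntervalIntegrable (fun x => e x * F x) volume (-L) 0 := by
    apply ((hec.mul (hfc.comp continuous_neg)).neg.intervalIntegrable (-L) 0).congr
    rw [Set.uIoc_of_le (by linarith)]
    exact fun x hx => (hneg x hx).symm
  rw [← intervalIntegral.integral_add_adjacent_intervals i2 i1]
  have e1 : ∫ x in (0 : ℝ)..L, e x * F x = ∫ x in (0 : ℝ)..L, e x * f x := by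
    apply intervalIntegral.integral_congr_ae
    rw [Set.uIoc_of_le hL.le]
    exact ae_of_all _ hpos
  have e2 : ∫ x in (-L)..0, e x * F x = ∫ x in (0 : ℝ)..L, -(e (-x) * f x) := by
    have h := intervalIntegral.integral_comp_neg (a := 0) (b := L)
      (fun x : ℝ => -(e x * f (-x)))
    simp only [neg_neg, neg_zero] at h
    rw [h]
    apply intervalIntegral.integral_congr_ae
    rw [Set.uIoc_of_le (by linarith)]
    exact ae_of_all _ hneg
  rw [e1, e2, ← intervalIntegral.integral_add
    
    (by apply Continuous.intervalIntegrable; fun_prop)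
    (by apply Continuous.intervalIntegrable; fun_prop)]
  have e3 : ∀ x : ℝ, -(e (-x) * f x) + e x * f x
      = -2 * Complex.I * ((f x * Real.sin (n * π * x / L) : ℝ) : ℂ) := fun x => by
    push_cast
    rw [Complex.sin]
    simp only [he]
    push_cast
    rw [show -(n * π * -(x : ℂ) / L * Complex.I) = n * π * x / L * Complex.I by ring,
      show -((n : ℂ) * π * x / L) * Complex.I = -(n * π * x / L * Complex.I) by ring]
    linear_combination ((Complex.exp (-(n * π * x / L * Complex.I))
      - Complex.exp (n * π * x / L * Complex.I)) * f x) * Complex.I_sq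
  simp_rw [e3]
  rw [intervalIntegral.integral_const_mul, intervalIntegral.integral_ofReal, Complex.real_smul]
  push_cast
  have : (L : ℂ) ≠ 0 := by exact_mod_cast hL.ne'
  field_simp
  ring

/-- Parseval's identity for the sine basis of `(0, L)`. -/
lemma hasSum_sq_sineCoeff {L : ℝ} (hL : 0 < L) {f : ℝ → ℝ} (hf : Continuous f) :
    HasSum (fun n : ℕ => (∫ x in (0 : ℝ)..L, f x * Real.sin (((n : ℝ) + 1) * π * x / L)) ^ 2)
      (L / 2 * ∫ x in (0 : ℝ)..L, f x ^ 2) := by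
  set F : ℝ → ℂ := fun x => if 0 < x then (f x : ℂ) else -(f (-x) : ℂ) with hF
  have hnorm : ∀ x, ‖F x‖ = if 0 < x then |f x| else |f (-x)| := fun x => by
    simp only [hF]
    split_ifs <;> simp
  have hLp : MemLp F 2 (volume.restrict (Set.Ioc (-L) L)) := by
    obtain ⟨C, hC⟩ := (isCompact_Icc (a := -L) (b := L)).exists_bound_of_continuousOn
      hf.continuousOn
    apply MemLp.of_bound _ C
    · refine (ae_restrict_iff' measurableSet_Ioc).2 (ae_of_all _ fun x hx => ?_)
      rw [hnorm]
      split_ifs with h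
      · exact hC x ⟨by linarith, hx.2⟩
      · exact hC (-x) ⟨by linarith, by linarith [hx.1]⟩
    · apply Measurable.aestronglyMeasurable
      apply Measurable.ite measurableSet_Ioi
      · exact (Complex.continuous_ofReal.comp hf).measurable
      · exact (Complex.continuous_ofReal.comp (hf.comp continuous_neg)).neg.measurable
  have h := hasSum_sq_fourierCoeffOn (show -L < L by linarith) hLp
  simp_rw [hF, fourierCoeffOn_odd hL hf] at h
  change HasSum _ ((L - -L)⁻¹ • ∫ x in (-L)..L, ‖F x‖ ^ 2) at h
  have hfi : ∫ x in (-L)..L, ‖F x‖ ^ 2 = 2 * ∫ x in (0 : ℝ)..L, f x ^ 2 := by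
    have hpos : ∀ x ∈ Set.Ioc (0 : ℝ) L, ‖F x‖ ^ 2 = f x ^ 2 := fun x hx => by
      rw [hnorm, if_pos hx.1, sq_abs]
    have hneg : ∀ x ∈ Set.Ioc (-L) (0 : ℝ), ‖F x‖ ^ 2 = f (-x) ^ 2 := fun x hx => by
      rw [hnorm, if_neg (not_lt.2 hx.2), sq_abs]
    have i1 : IntervalIntegrable (fun x => ‖F x‖ ^ 2) volume 0 L := by
      apply ((hf.pow 2).intervalIntegrable 0 L).congr
      rw [Set.uIoc_of_le hL.le]
      exact fun x hx => (hpos x hx).symm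
    have i2 : IntervalIntegrable (fun x => ‖F x‖ ^ 2) volume (-L) 0 := by
      apply (((hf.comp continuous_neg).pow 2).intervalIntegrable (-L) 0).congr
      rw [Set.uIoc_of_le (by linarith)]
      exact fun x hx => (hneg x hx).symm
    rw [← intervalIntegral.integral_add_adjacent_intervals i2 i1, two_mul]
    congr 1
    · have h := intervalIntegral.integral_comp_neg (a := 0) (b := L) (fun x : ℝ => f (-x) ^ 2)
      simp only [neg_neg, neg_zero] at h
      rw [h]
      apply intervalIntegral.integral_congr_ae
      rw [Set.uIoc_of_le (by linarith)]
      exact ae_of_all _ hneg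
    · apply intervalIntegral.integral_congr_ae
      rw [Set.uIoc_of_le hL.le]
      exact ae_of_all _ hpos
  rw [hfi] at h
  have hs := h.nat_add_neg
  have hs2 := (hasSum_nat_add_iff' 1).2 hs
  have hs3 := hs2.mul_left (L ^ 2 / 2)
  refine Eq.mp (congrArg₂ (fun g s => HasSum g s) ?_ ?_) hs3
  · funext n
    have h1 : ∀ x : ℝ, Real.sin (((-((n + 1 : ℕ) : ℤ) : ℤ) : ℝ) * π * x / L)
        = -Real.sin (((n : ℝ) + 1) * π * x / L) := fun x => by
      rw [← Real.sin_neg]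
      congr 1
      push_cast
      ring
    simp_rw [h1]
    simp only [norm_mul, norm_neg, norm_div, Complex.norm_I, Complex.norm_real, mul_neg,
      intervalIntegral.integral_neg, Real.norm_eq_abs, mul_pow, sq_abs, abs_of_pos hL]
    push_cast
    field_simp
    ring
  · simp
    field_simp
    ring

lemma integral_eq_interval_of_zero {L : ℝ} (hL : 0 < L) {f : ℝ → ℝ}
    (h0 : ∀ x ∉ Set.Ioo 0 L, f x = 0) : ∫ x, f x = ∫ x in (0 : ℝ)..L, f x := by
  rw [intervalIntegral.integral_of_le hL.le]
  refine (setIntegral_eq_integral_of_forall_compl_eq_zero fun x hx => h0 x fun h => hx ?_).symm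
  exact Set.Ioo_subset_Ioc_self h

lemma lintegral_sq_eq_tsum_sine {L : ℝ} (hL : 0 < L) {f : ℝ → ℝ} (hf : Continuous f)
    (h0 : ∀ x ∉ Set.Ioo 0 L, f x = 0) :
    ∫⁻ x, ENNReal.ofReal (f x ^ 2) = ∑' n : ℕ, ENNReal.ofReal
      (2 / L * (∫ x, f x * Real.sin (((n : ℝ) + 1) * π * x / L)) ^ 2) := by
  have h := (hasSum_sq_sineCoeff hL hf).mul_left (2 / L)
  have h2 : 2 / L * (L / 2 * ∫ x in (0 : ℝ)..L, f x ^ 2) = ∫ x, f x ^ 2 := by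
    rw [integral_eq_interval_of_zero hL fun x hx => by rw [h0 x hx]; simp]
    field_simp
  have hfi : Integrable fun x => f x ^ 2 := by
    apply (hf.pow 2).integrable_of_hasCompactSupport
    apply HasCompactSupport.intro (isCompact_Icc (a := 0) (b := L))
    intro x hx
    change f x ^ 2 = 0
    rw [h0 x fun h => hx (Set.Ioo_subset_Icc_self h)]
    simp
  rw [← ofReal_integral_eq_lintegral_ofReal hfi (ae_of_all _ fun x => sq_nonneg _), ← h2,
    ← h.tsum_eq, ENNReal.ofReal_tsum_of_nonneg (fun n => by positivity) h.summable]
  refine tsum_congr fun n => ?_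
  rw [integral_eq_interval_of_zero hL fun x hx => by rw [h0 x hx]; simp]

/-- Dirichlet eigenfunctions of the Laplacian on `R_a`. -/
def dirMode (a : ℝ) (m n : ℕ) (p : ℝ × ℝ) : ℝ :=
  Real.sin (((m : ℝ) + 1) * π * p.1 / a) * Real.sin (((n : ℝ) + 1) * π * p.2 / (1 / a))

lemma Adm.eq_zero {Ω : Set (ℝ × ℝ)} {u : ℝ × ℝ → ℝ} (h : Adm Ω u) {p : ℝ × ℝ} (hp : p ∉ Ω) :
    u p = 0 :=
  image_eq_zero_of_notMem_tsupport fun hp' => hp (h.2.2 hp')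

/-- Parseval's identity on `R_a`. -/
lemma Adm.lintegral_sq {a : ℝ} (ha : 0 < a) {u : ℝ × ℝ → ℝ} (h : Adm (Rect a) u) :
    ∫⁻ p, ENNReal.ofReal (u p ^ 2)
      = ∑' m : ℕ, ∑' n : ℕ, ENNReal.ofReal (4 * (∫ p, u p * dirMode a m n p) ^ 2) := by
  have hz : ∀ x y, ¬ (x ∈ Set.Ioo 0 a ∧ y ∈ Set.Ioo 0 (1 / a)) → u (x, y) = 0 := fun x y hxy =>
    h.eq_zero fun hp => hxy hp
  have hu := h.continuous
  set b : ℕ → ℝ → ℝ := fun m y => ∫ x, u (x, y) * Real.sin (((m : ℝ) + 1) * π * x / a) with hb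
  have hbc : ∀ m, Continuous (b m) := fun m => by
    have : b m = fun y => ∫ x in (0 : ℝ)..a, u (x, y) * Real.sin (((m : ℝ) + 1) * π * x / a) := by
      funext y
      simp only [hb]
      rw [integral_eq_interval_of_zero ha fun x hx => by rw [hz x y fun h => hx h.1]; simp]
    rw [this]
    apply intervalIntegral.continuous_parametric_intervalIntegral_of_continuous' (by fun_prop)
  have hb0 : ∀ m, ∀ y ∉ Set.Ioo 0 (1 / a), b m y = 0 := fun m y hy => by
    simp only [hb, hz _ y fun h => hy h.2, zero_mul, integral_zero]
  have hmode : ∀ m n, ∫ p, u p * dirMode a m n p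
      = ∫ y, b m y * Real.sin (((n : ℝ) + 1) * π * y / (1 / a)) := fun m n => by
    have hd : Continuous (dirMode a m n) := by unfold dirMode; fun_prop
    rw [Measure.volume_eq_prod, integral_prod_symm _ (h.integrable_mul hd)]
    congr 1
    funext y
    simp only [hb]
    rw [← integral_mul_const]
    congr 1
    funext x
    simp only [dirMode]
    ring
  simp_rw [hmode]
  rw [Measure.volume_eq_prod, lintegral_prod_symm _ (by fun_prop)]
  have h1 : ∀ y, ∫⁻ x, ENNReal.ofReal (u (x, y) ^ 2)
      = ∑' m, ENNReal.ofReal (2 / a * b m y ^ 2) := fun y =>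
    lintegral_sq_eq_tsum_sine ha (f := fun x => u (x, y)) (by fun_prop)
      fun x hx => hz x y fun h => hx h.1
  simp_rw [h1]
  rw [lintegral_tsum fun m => by have := hbc m; fun_prop]
  refine tsum_congr fun m => ?_
  simp_rw [ENNReal.ofReal_mul (show 0 ≤ 2 / a by positivity)]
  rw [lintegral_const_mul _ (by have := hbc m; fun_prop),
    lintegral_sq_eq_tsum_sine (by positivity) (hbc m) (hb0 m), ← ENNReal.tsum_mul_left]
  refine tsum_congr fun n => ?_
  rw [← ENNReal.ofReal_mul (by positivity)]
  congr 1
  field_simp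
  ring

lemma hasDerivAt_sin_mul (c x : ℝ) :
    HasDerivAt (fun x => Real.sin (c * x)) (c * Real.cos (c * x)) x := by
  have h := (((hasDerivAt_id x).const_mul c)).sin
  simpa [mul_comm] using h

lemma hasDerivAt_cos_mul (c x : ℝ) :
    HasDerivAt (fun x => Real.cos (c * x)) (-c * Real.sin (c * x)) x := by
  have h := (((hasDerivAt_id x).const_mul c)).cos
  simpa [mul_comm] using h

lemma lap_dirMode {a : ℝ} (ha : 0 < a) (m n : ℕ) : lap (dirMode a m n) = fun p =>
    -(π ^ 2 * ((((m : ℝ) + 1) / a) ^ 2 + (((n : ℝ) + 1) * a) ^ 2)) * dirMode a m n p := by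
  have e : dirMode a m n = fun p : ℝ × ℝ =>
      Real.sin ((((m : ℝ) + 1) * π / a) * p.1) * Real.sin ((((n : ℝ) + 1) * π * a) * p.2) := by
    funext p
    simp only [dirMode]
    congr 2
    · ring
    · field_simp
  rw [e, lap_tensor (hasDerivAt_sin_mul _) (fun x => (hasDerivAt_cos_mul _ x).const_mul _)
    (hasDerivAt_sin_mul _) (fun x => (hasDerivAt_cos_mul _ x).const_mul _)]
  funext p
  field_simp
  ring

lemma Adm.integral_lap_mul_dirMode {a : ℝ} (ha : 0 < a) {u : ℝ × ℝ → ℝ} (h : Adm (Rect a) u)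
    (m n : ℕ) : ∫ p, _root_.lap u p * dirMode a m n p
      = -(π ^ 2 * ((((m : ℝ) + 1) / a) ^ 2 + (((n : ℝ) + 1) * a) ^ 2))
        * ∫ p, u p * dirMode a m n p := by
  have hd : ContDiff ℝ (⊤ : ℕ∞) (dirMode a m n) := by unfold dirMode; fun_prop
  rw [h.integral_lap_mul hd, lap_dirMode ha, ← integral_const_mul]
  congr 1
  funext p
  ring

/-- An admissible function without low frequencies has large Rayleigh quotient. -/
lemma Adm.le_integral_lap_sq {a R : ℝ} (ha : 0 < a) {E : Finset (ℕ × ℕ)}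
    (hE : ∀ p ∉ E, R ^ 2 ≤ (((p.1 : ℝ) + 1) / a) ^ 2 + (((p.2 : ℝ) + 1) * a) ^ 2)
    {u : ℝ × ℝ → ℝ} (h : Adm (Rect a) u) (h0 : ∀ p ∈ E, ∫ q, u q * dirMode a p.1 p.2 q = 0) :
    (π * R) ^ 4 * ∫ p, u p ^ 2 ≤ ∫ p, _root_.lap u p ^ 2 := by
  have hsq : ∀ {w : ℝ × ℝ → ℝ}, Adm (Rect a) w → Integrable fun p => w p ^ 2 := fun hw => by
    simpa only [sq] using hw.integrable_mul hw.continuous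
  have key : ENNReal.ofReal ((π * R) ^ 4) * ∫⁻ p, ENNReal.ofReal (u p ^ 2)
      ≤ ∫⁻ p, ENNReal.ofReal (_root_.lap u p ^ 2) := by
    rw [h.lintegral_sq ha, h.lap.lintegral_sq ha, ← ENNReal.tsum_mul_left]
    refine ENNReal.tsum_le_tsum fun m => ?_
    rw [← ENNReal.tsum_mul_left]
    refine ENNReal.tsum_le_tsum fun n => ?_
    rw [← ENNReal.ofReal_mul (by positivity), h.integral_lap_mul_dirMode ha]
    apply ENNReal.ofReal_le_ofReal
    by_cases hp : (m, n) ∈ E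
    · simp [h0 _ hp]
    · have h1 := hE _ hp
      have h2 := pow_le_pow_left₀ (sq_nonneg R) h1 2
      have h3 : 0 ≤ π ^ 4 * (4 * (∫ q, u q * dirMode a m n q) ^ 2) := by positivity
      have h4 := mul_le_mul_of_nonneg_right h2 h3
      refine le_trans (le_of_eq ?_) (h4.trans (le_of_eq ?_)) <;> ring
  rw [← ofReal_integral_eq_lintegral_ofReal (hsq h) (ae_of_all _ fun x => sq_nonneg _),
    ← ofReal_integral_eq_lintegral_ofReal (hsq h.lap) (ae_of_all _ fun x => sq_nonneg _),
    ← ENNReal.ofReal_mul (by positivity)] at key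
  exact (ENNReal.ofReal_le_ofReal_iff (integral_nonneg fun p => sq_nonneg _)).1 key

/-- A positive definite form on a finite-dimensional space is coercive. -/
lemma exists_coercive {ι : Type*} [Fintype ι] (G : ι → ι → ℝ)
    (hG : ∀ c : ι → ℝ, c ≠ 0 → 0 < ∑ i, ∑ j, c i * c j * G i j) :
    ∃ β > 0, ∀ c : ι → ℝ, β * ∑ i, c i ^ 2 ≤ ∑ i, ∑ j, c i * c j * G i j := by
  have hcont : Continuous fun c : EuclideanSpace ℝ ι => ∑ i, ∑ j, c i * c j * G i j := by fun_prop
  have hnorm : ∀ c : ι → ℝ, ∑ i, c i ^ 2 = ‖WithLp.toLp 2 c‖ ^ 2 := fun c => by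
    rw [EuclideanSpace.real_norm_sq_eq]
  have key : ∃ β > 0, ∀ c : EuclideanSpace ℝ ι, ‖c‖ = 1 →
      β ≤ ∑ i, ∑ j, c i * c j * G i j := by
    by_cases hne : (Metric.sphere (0 : EuclideanSpace ℝ ι) 1).Nonempty
    · obtain ⟨c₀, hc₀, hmin⟩ := (isCompact_sphere _ _).exists_isMinOn hne hcont.continuousOn
      refine ⟨_, hG c₀ fun h => ?_, fun c hc => hmin (by simpa using hc)⟩
      have h0 : c₀ = 0 := by ext i; exact congrFun h i
      simp [h0] at hc₀
    · exact ⟨1, one_pos, fun c hc => (hne ⟨c, by simpa using hc⟩).elim⟩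
  obtain ⟨β, hβ, h⟩ := key
  refine ⟨β, hβ, fun c => ?_⟩
  by_cases hc : c = 0
  · simp [hc]
  set x : EuclideanSpace ℝ ι := WithLp.toLp 2 c with hx
  have hx0 : ‖x‖ ≠ 0 := by
    rw [norm_ne_zero_iff]
    intro h
    exact hc (congrArg WithLp.ofLp h)
  have h1 := h (‖x‖⁻¹ • x) (by rw [norm_smul, norm_inv, norm_norm, inv_mul_cancel₀ hx0])
  have h2 : ∑ i, ∑ j, (‖x‖⁻¹ • x) i * (‖x‖⁻¹ • x) j * G i j
      = (‖x‖ ^ 2)⁻¹ * ∑ i, ∑ j, c i * c j * G i j := by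
    simp only [Finset.mul_sum]
    refine Finset.sum_congr rfl fun i _ => Finset.sum_congr rfl fun j _ => ?_
    simp [hx]
    ring
  rw [h2] at h1
  rw [hnorm, mul_comm]
  rwa [inv_mul_eq_div, le_div_iff₀ (by positivity), mul_comm] at h1

lemma sq_sum_eq {ι : Type*} [Fintype ι] (c f : ι → ℝ) :
    (∑ i, c i * f i) ^ 2 = ∑ i, ∑ j, c i * c j * (f i * f j) := by
  rw [sq, Finset.sum_mul_sum]
  refine Finset.sum_congr rfl fun i _ => Finset.sum_congr rfl fun j _ => by ring

lemma integral_sq_sum {ι α : Type*} [Fintype ι] [MeasurableSpace α] {μ : Measure α}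
    {f : ι → α → ℝ} (hf : ∀ i j, Integrable (fun p => f i p * f j p) μ) (c : ι → ℝ) :
    ∫ p, (∑ i, c i * f i p) ^ 2 ∂μ = ∑ i, ∑ j, c i * c j * ∫ p, f i p * f j p ∂μ := by
  simp_rw [sq_sum_eq]
  rw [integral_finsetSum _ fun i _ => integrable_finsetSum _ fun j _ => (hf i j).const_mul _]
  refine Finset.sum_congr rfl fun i _ => ?_
  rw [integral_finsetSum _ fun j _ => (hf i j).const_mul _]
  exact Finset.sum_congr rfl fun j _ => integral_const_mul _ _

lemma sum_sum_mul_le {ι : Type*} [Fintype ι] (G : ι → ι → ℝ) (c : ι → ℝ) :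
    ∑ i, ∑ j, c i * c j * G i j ≤ (∑ i, ∑ j, |G i j|) * ∑ i, c i ^ 2 := by
  rw [Finset.sum_mul]
  refine Finset.sum_le_sum fun i _ => ?_
  rw [Finset.sum_mul]
  refine Finset.sum_le_sum fun j _ => ?_
  have hi : c i ^ 2 ≤ ∑ i, c i ^ 2 :=
    Finset.single_le_sum (f := fun i => c i ^ 2) (fun _ _ => sq_nonneg _) (Finset.mem_univ i)
  have hj : c j ^ 2 ≤ ∑ i, c i ^ 2 :=
    Finset.single_le_sum (f := fun i => c i ^ 2) (fun _ _ => sq_nonneg _) (Finset.mem_univ j)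
  have h : |c i * c j| ≤ ∑ i, c i ^ 2 := by
    rw [abs_le]
    constructor <;> nlinarith [sq_nonneg (c i - c j), sq_nonneg (c i + c j)]
  calc c i * c j * G i j ≤ |c i * c j * G i j| := le_abs_self _
    _ = |G i j| * |c i * c j| := by rw [abs_mul, mul_comm]
    _ ≤ _ := by gcongr

lemma Adm.integral_sq_pos {Ω : Set (ℝ × ℝ)} {u : ℝ × ℝ → ℝ} (h : Adm Ω u) (hu : u ≠ 0) :
    0 < ∫ p, u p ^ 2 := by
  obtain ⟨p, hp⟩ := Function.ne_iff.1 hu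
  have hi : Integrable fun p => u p ^ 2 := by
    simpa only [sq] using h.integrable_mul h.continuous
  exact (h.continuous.pow 2).integral_pos_of_hasCompactSupport_nonneg_nonzero
    (by simpa only [sq] using h.2.1.mul_right) (fun p => sq_nonneg (u p)) (pow_ne_zero 2 hp)

/-- The Rayleigh quotients of the nonzero combinations of finitely many admissible functions. -/
def rayleighSet {k : ℕ} (u : Fin k → ℝ × ℝ → ℝ) : Set ℝ :=
  { r | ∃ c : Fin k → ℝ, c ≠ 0 ∧ r = (∫ p, (lap (fun q => ∑ i, c i * u i q) p) ^ 2) /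
    (∫ p, (∑ i, c i * u i p) ^ 2) }

lemma sum_mul_ne_zero {ι : Type*} [Fintype ι] {u : ι → ℝ × ℝ → ℝ} (hu : LinearIndependent ℝ u)
    {c : ι → ℝ} (hc : c ≠ 0) : (fun p => ∑ i, c i * u i p) ≠ 0 := by
  intro h
  apply hc
  have := Fintype.linearIndependent_iff.1 hu c (by
    rw [← h]
    funext p
    simp)
  funext i
  exact this i

lemma bddAbove_rayleighSet {k : ℕ} {Ω : Set (ℝ × ℝ)} {u : Fin k → ℝ × ℝ → ℝ}
    (h : ∀ i, Adm Ω (u i)) (hu : LinearIndependent ℝ u) : BddAbove (rayleighSet u) := by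
  have hB : ∀ c : Fin k → ℝ, ∫ p, (∑ i, c i * u i p) ^ 2
      = ∑ i, ∑ j, c i * c j * ∫ p, u i p * u j p :=
    integral_sq_sum fun i j => (h i).integrable_mul (h j).continuous
  have hA : ∀ c : Fin k → ℝ, ∫ p, (∑ i, c i * lap (u i) p) ^ 2
      = ∑ i, ∑ j, c i * c j * ∫ p, lap (u i) p * lap (u j) p :=
    integral_sq_sum fun i j => (h i).lap.integrable_mul (h j).lap.continuous
  obtain ⟨β, hβ, hb⟩ := exists_coercive (fun i j => ∫ p, u i p * u j p) fun c hc => by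
    rw [← hB]
    exact (Adm.sum h c Finset.univ).integral_sq_pos (sum_mul_ne_zero hu hc)
  refine ⟨(∑ i, ∑ j, |∫ p, lap (u i) p * lap (u j) p|) / β, ?_⟩
  rintro _ ⟨c, hc, rfl⟩
  rw [lap_sum _ h, hA, hB]
  have h0 : 0 < ∑ i, c i ^ 2 := by
    obtain ⟨i, hi⟩ := Function.ne_iff.1 hc
    exact Finset.sum_pos' (fun _ _ => sq_nonneg _) ⟨i, Finset.mem_univ i, by
      have : c i ≠ 0 := hi
      positivity⟩
  have h1 := hb c
  rw [div_le_div_iff₀ (lt_of_lt_of_le (by positivity) h1) hβ]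
  calc _ ≤ ((∑ i, ∑ j, |∫ p, lap (u i) p * lap (u j) p|) * ∑ i, c i ^ 2) * β := by
        gcongr
        exact sum_sum_mul_le _ c
    _ = (∑ i, ∑ j, |∫ p, lap (u i) p * lap (u j) p|) * (β * ∑ i, c i ^ 2) := by ring
    _ ≤ _ := by gcongr

lemma exists_linearIndependent_adm {a : ℝ} (ha : 0 < a) (k : ℕ) :
    ∃ u : Fin k → ℝ × ℝ → ℝ, (∀ i, Adm (Rect a) (u i)) ∧ LinearIndependent ℝ u := by
  have hopen : IsOpen (Rect a) := isOpen_Ioo.prod isOpen_Ioo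
  have hmem : ((a / 2, 1 / a / 2) : ℝ × ℝ) ∈ Rect a := by
    have : 0 < 1 / a := by positivity
    constructor <;> constructor <;> simp only <;> linarith
  obtain ⟨f, hf1, hf2, hf3, -, hf4⟩ :=
    exists_contDiff_tsupport_subset (n := (⊤ : ℕ∞)) (hopen.mem_nhds hmem)
  refine ⟨fun i p => f p * p.1 ^ (i : ℕ), fun i => ⟨hf3.mul (by fun_prop), hf2.mul_right,
    (tsupport_mul_subset_left (g := fun p : ℝ × ℝ => p.1 ^ (i : ℕ))).trans hf1⟩, ?_⟩
  rw [Fintype.linearIndependent_iff]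
  intro c hc
  have hev : ∀ᶠ p in nhds ((a / 2, 1 / a / 2) : ℝ × ℝ), f p ≠ 0 :=
    hf3.continuous.continuousAt.eventually_ne (by rw [hf4]; simp)
  have hcs : ContinuousAt (fun x : ℝ => ((x, 1 / a / 2) : ℝ × ℝ)) (a / 2) := by fun_prop
  have hev' := hcs.eventually hev
  set P : Polynomial ℝ := ∑ i : Fin k, Polynomial.monomial (i : ℕ) (c i) with hP
  have hP0 : P = 0 := by
    apply Polynomial.eq_zero_of_infinite_isRoot
    refine Set.Infinite.mono ?_ (infinite_of_mem_nhds _ hev')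
    intro x hx
    have h1 := congrFun hc (x, 1 / a / 2)
    have h2 : f (x, 1 / a / 2) * P.eval x = 0 := by
      rw [hP, Polynomial.eval_finsetSum, Finset.mul_sum]
      simp only [Polynomial.eval_monomial]
      refine Eq.trans ?_ h1
      rw [Finset.sum_apply]
      refine Finset.sum_congr rfl fun i _ => ?_
      simp only [Pi.smul_apply, smul_eq_mul]
      ring
    exact (mul_eq_zero.1 h2).resolve_left hx
  intro i
  have h3 := congrArg (fun Q => Polynomial.coeff Q (i : ℕ)) hP0
  simpa [hP, Polynomial.finsetSum_coeff, Polynomial.coeff_monomial, Fin.val_inj] using h3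

lemma le_lamk {a R : ℝ} (ha : 0 < a) (E : Finset (ℕ × ℕ))
    (hE : ∀ p ∉ E, R ^ 2 ≤ (((p.1 : ℝ) + 1) / a) ^ 2 + (((p.2 : ℝ) + 1) * a) ^ 2) {k : ℕ}
    (hk : E.card < k) : (π * R) ^ 4 ≤ lamk k a := by
  obtain ⟨u₀, h₀, hu₀⟩ := exists_linearIndependent_adm ha k
  unfold lamk
  refine le_csInf ⟨sSup (rayleighSet u₀), u₀, h₀, hu₀, rfl⟩ ?_
  rintro _ ⟨u, h, hu, rfl⟩
  let T : (Fin k → ℝ) →ₗ[ℝ] (E → ℝ) :=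
    { toFun := fun c p => ∑ i, c i * ∫ q, u i q * dirMode a p.1.1 p.1.2 q
      map_add' := fun c d => by funext p; simp [add_mul, Finset.sum_add_distrib]
      map_smul' := fun t c => by funext p; simp [Finset.mul_sum, mul_assoc] }
  obtain ⟨c, hcT, hc⟩ := (Submodule.ne_bot_iff _).1
    (LinearMap.ker_ne_bot_of_finrank_lt (f := T) (by simpa using hk))
  have hadm : Adm (Rect a) fun p => ∑ i, c i * u i p := Adm.sum h c Finset.univ
  have horth : ∀ p ∈ E, ∫ q, (∑ i, c i * u i q) * dirMode a p.1 p.2 q = 0 := fun p hp => by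
    have hd : Continuous (dirMode a p.1 p.2) := by unfold dirMode; fun_prop
    have h1 := congrFun (LinearMap.mem_ker.1 hcT) ⟨p, hp⟩
    simp only [Finset.sum_mul, mul_assoc]
    rw [integral_finsetSum _ fun i _ => ((h i).integrable_mul hd).const_mul _]
    simp only [integral_const_mul]
    exact h1
  have hpos := hadm.integral_sq_pos (sum_mul_ne_zero hu hc)
  refine le_trans ?_ (le_csSup (bddAbove_rayleighSet h hu) ⟨c, hc, rfl⟩)
  rw [le_div_iff₀ hpos]
  exact hadm.le_integral_lap_sq ha hE horth

lemma integral_cos_int_mul_pi (k : ℤ) :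
    ∫ x in (0 : ℝ)..1, Real.cos (k * π * x) = if k = 0 then 1 else 0 := by
  split_ifs with hk
  · simp [hk]
  · have h : ((k : ℝ) * π) ≠ 0 := mul_ne_zero (by exact_mod_cast hk) Real.pi_ne_zero
    rw [intervalIntegral.integral_comp_mul_left (fun x => Real.cos x) h, integral_cos]
    simp [Real.sin_int_mul_pi]

lemma integral_cos_mul_cos (i j : ℕ) :
    ∫ x in Set.Ioo (0 : ℝ) 1, Real.cos (i * π * x) * Real.cos (j * π * x)
      = ((if (i : ℤ) - j = 0 then 1 else 0) + if (i : ℤ) + j = 0 then 1 else 0) / 2 := by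
  rw [← integral_Ioc_eq_integral_Ioo, ← intervalIntegral.integral_of_le zero_le_one]
  have h : ∀ x : ℝ, Real.cos (i * π * x) * Real.cos (j * π * x)
      = (Real.cos (((i - j : ℤ) : ℝ) * π * x) + Real.cos (((i + j : ℤ) : ℝ) * π * x)) / 2 :=
    fun x => by
      push_cast
      rw [show ((i : ℝ) - j) * π * x = i * π * x - j * π * x by ring,
        show ((i : ℝ) + j) * π * x = i * π * x + j * π * x by ring, Real.cos_sub, Real.cos_add]
      ring
  simp_rw [h]
  rw [intervalIntegral.integral_div, intervalIntegral.integral_add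
    (Continuous.intervalIntegrable (by fun_prop) _ _)
    (Continuous.intervalIntegrable (by fun_prop) _ _), integral_cos_int_mul_pi,
    integral_cos_int_mul_pi]

lemma integral_sin_mul_sin (i j : ℕ) :
    ∫ x in Set.Ioo (0 : ℝ) 1, Real.sin ((i + 1) * π * x) * Real.sin ((j + 1) * π * x)
      = if i = j then 1 / 2 else 0 := by
  rw [← integral_Ioc_eq_integral_Ioo, ← intervalIntegral.integral_of_le zero_le_one]
  have h : ∀ x : ℝ, Real.sin ((i + 1) * π * x) * Real.sin ((j + 1) * π * x)
      = (Real.cos (((i - j : ℤ) : ℝ) * π * x) - Real.cos (((i + j + 2 : ℤ) : ℝ) * π * x)) / 2 :=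
    fun x => by
      push_cast
      rw [show ((i : ℝ) - j) * π * x = (i + 1) * π * x - (j + 1) * π * x by ring,
        show ((i : ℝ) + j + 2) * π * x = (i + 1) * π * x + (j + 1) * π * x by ring,
        Real.cos_sub, Real.cos_add]
      ring
  simp_rw [h]
  rw [intervalIntegral.integral_div, intervalIntegral.integral_sub
    (Continuous.intervalIntegrable (by fun_prop) _ _)
    (Continuous.intervalIntegrable (by fun_prop) _ _), integral_cos_int_mul_pi,
    integral_cos_int_mul_pi, if_neg (show ¬ (i : ℤ) + j + 2 = 0 by omega)]
  by_cases hij : i = j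
  · simp [hij]
  · rw [if_neg hij, if_neg (by omega)]
    simp

lemma measurableSet_Rect (a : ℝ) : MeasurableSet (Rect a) := measurableSet_Ioo.prod measurableSet_Ioo

lemma Rect_one : Rect 1 = Set.Ioo (0 : ℝ) 1 ×ˢ Set.Ioo (0 : ℝ) 1 := by simp [Rect]

lemma integrableOn_Rect_one {f : ℝ × ℝ → ℝ} (hf : Continuous f) : IntegrableOn f (Rect 1) := by
  have : IntegrableOn f (Set.Icc (0 : ℝ) 1 ×ˢ Set.Icc (0 : ℝ) 1) :=
    hf.continuousOn.integrableOn_compact (isCompact_Icc.prod isCompact_Icc)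
  rw [Rect_one]
  exact this.mono_set (Set.prod_mono Set.Ioo_subset_Icc_self Set.Ioo_subset_Icc_self)

lemma integral_Rect_one_mul (f g : ℝ → ℝ) : ∫ p in Rect 1, f p.1 * g p.2
    = (∫ x in Set.Ioo (0 : ℝ) 1, f x) * ∫ x in Set.Ioo (0 : ℝ) 1, g x := by
  rw [Rect_one, Measure.volume_eq_prod, setIntegral_prod_mul]

lemma integral_sq_sum_of_orthogonal {ι α : Type*} [Fintype ι] [MeasurableSpace α] {μ : Measure α}
    {f : ι → α → ℝ} (hf : ∀ i j, Integrable (fun p => f i p * f j p) μ)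
    (h0 : ∀ i j, i ≠ j → ∫ p, f i p * f j p ∂μ = 0) (c : ι → ℝ) :
    ∫ p, (∑ i, c i * f i p) ^ 2 ∂μ = ∑ i, c i ^ 2 * ∫ p, f i p * f i p ∂μ := by
  rw [integral_sq_sum hf]
  refine Finset.sum_congr rfl fun i _ => ?_
  rw [Finset.sum_eq_single i (fun j _ hj => by rw [h0 i j hj.symm, mul_zero]) (by simp), sq]

/-- The product of cosines `cos (iπx) cos (jπy)`. -/
def cosMode (t p : ℝ × ℝ) : ℝ := Real.cos (t.1 * π * p.1) * Real.cos (t.2 * π * p.2)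

lemma integral_cosMode_mul {s t : ℕ × ℕ} (h : s ≠ t) :
    ∫ p in Rect 1, cosMode (s.1, s.2) p * cosMode (t.1, t.2) p = 0 := by
  have e : ∀ p : ℝ × ℝ, cosMode (s.1, s.2) p * cosMode (t.1, t.2) p
      = (Real.cos (s.1 * π * p.1) * Real.cos (t.1 * π * p.1))
        * (Real.cos (s.2 * π * p.2) * Real.cos (t.2 * π * p.2)) := fun p => by
    simp only [cosMode]
    ring
  simp_rw [e]
  rw [integral_Rect_one_mul (fun x => Real.cos (s.1 * π * x) * Real.cos (t.1 * π * x))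
    (fun y => Real.cos (s.2 * π * y) * Real.cos (t.2 * π * y)), integral_cos_mul_cos,
    integral_cos_mul_cos]
  by_cases h1 : s.1 = t.1
  · have h2 : s.2 ≠ t.2 := fun h2 => h (Prod.ext h1 h2)
    rw [if_neg (show ¬ (s.2 : ℤ) - t.2 = 0 by omega), if_neg (show ¬ (s.2 : ℤ) + t.2 = 0 by omega)]
    simp
  · rw [if_neg (show ¬ (s.1 : ℤ) - t.1 = 0 by omega), if_neg (show ¬ (s.1 : ℤ) + t.1 = 0 by omega)]
    simp

/-- The trial profile `sin (πx) sin ((m+1)πx)`, which vanishes to second order at `0` and `1`. -/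
def trial (m : ℕ) (x : ℝ) : ℝ := Real.sin (π * x) * Real.sin (((m : ℝ) + 1) * π * x)

/-- First derivative of `trial m`. -/
def trial' (m : ℕ) (x : ℝ) : ℝ := π * Real.cos (π * x) * Real.sin (((m : ℝ) + 1) * π * x)
  + Real.sin (π * x) * (((m : ℝ) + 1) * π * Real.cos (((m : ℝ) + 1) * π * x))

/-- Second derivative of `trial m`. -/
def trial'' (m : ℕ) (x : ℝ) : ℝ := 2 * (((m : ℝ) + 1) * π ^ 2 * Real.cos (π * x)
  * Real.cos (((m : ℝ) + 1) * π * x)) - (1 + ((m : ℝ) + 1) ^ 2) * π ^ 2 * trial m x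

/-- Cosine coefficients of `trial m`. -/
def trialCoeff (m i : ℕ) : ℝ := ((if i = m then 1 else 0) - if i = m + 2 then 1 else 0) / 2

lemma sum_trialCoeff {m N : ℕ} (hm : m + 2 < N) (g : ℕ → ℝ) :
    ∑ i ∈ Finset.range N, trialCoeff m i * g i = (g m - g (m + 2)) / 2 := by
  have e : ∀ i, trialCoeff m i * g i = ((if i = m then g i else 0)
      - if i = m + 2 then g i else 0) / 2 := fun i => by
    unfold trialCoeff
    split_ifs <;> ring
  simp_rw [e]
  rw [← Finset.sum_div, Finset.sum_sub_distrib, Finset.sum_ite_eq', Finset.sum_ite_eq',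
    if_pos (Finset.mem_range.2 (by omega)), if_pos (Finset.mem_range.2 hm)]

lemma trial_eq_sum {m N : ℕ} (hm : m + 2 < N) (x : ℝ) :
    trial m x = ∑ i ∈ Finset.range N, trialCoeff m i * Real.cos (i * π * x) := by
  rw [sum_trialCoeff hm fun i => Real.cos (i * π * x), trial]
  push_cast
  rw [show (m : ℝ) * π * x = (m + 1) * π * x - π * x by ring,
    show ((m : ℝ) + 2) * π * x = (m + 1) * π * x + π * x by ring, Real.cos_sub, Real.cos_add]
  ring

lemma trial''_eq_sum {m N : ℕ} (hm : m + 2 < N) (x : ℝ) :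
    trial'' m x = ∑ i ∈ Finset.range N,
      trialCoeff m i * (-((i : ℝ) * π) ^ 2 * Real.cos (i * π * x)) := by
  rw [sum_trialCoeff hm fun i => -((i : ℝ) * π) ^ 2 * Real.cos (i * π * x), trial'', trial]
  push_cast
  rw [show (m : ℝ) * π * x = (m + 1) * π * x - π * x by ring,
    show ((m : ℝ) + 2) * π * x = (m + 1) * π * x + π * x by ring, Real.cos_sub, Real.cos_add]
  ring

lemma hasDerivAt_trial (m : ℕ) (x : ℝ) : HasDerivAt (trial m) (trial' m x) x := by
  refine ((hasDerivAt_sin_mul π x).mul (hasDerivAt_sin_mul (((m : ℝ) + 1) * π) x)).congr_deriv ?_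
  simp only [trial']

lemma hasDerivAt_trial' (m : ℕ) (x : ℝ) : HasDerivAt (trial' m) (trial'' m x) x := by
  refine ((((hasDerivAt_cos_mul π x).const_mul π).mul
    (hasDerivAt_sin_mul (((m : ℝ) + 1) * π) x)).add ((hasDerivAt_sin_mul π x).mul
    ((hasDerivAt_cos_mul (((m : ℝ) + 1) * π) x).const_mul (((m : ℝ) + 1) * π)))).congr_deriv ?_
  simp only [trial'', trial]
  ring

lemma continuous_trial (m : ℕ) : Continuous (trial m) := by unfold trial; fun_prop

lemma continuous_trial'' (m : ℕ) : Continuous (trial'' m) := by unfold trial'' trial; fun_prop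

/-- Tensor product of trial profiles. -/
def trialProd (t : ℕ × ℕ) (p : ℝ × ℝ) : ℝ := trial t.1 p.1 * trial t.2 p.2

/-- The Laplacian of `trialProd t`. -/
def trialLap (t : ℕ × ℕ) (p : ℝ × ℝ) : ℝ :=
  trial'' t.1 p.1 * trial t.2 p.2 + trial t.1 p.1 * trial'' t.2 p.2

lemma continuous_trialProd (t : ℕ × ℕ) : Continuous (trialProd t) := by
  have := continuous_trial
  unfold trialProd
  fun_prop

lemma continuous_trialLap (t : ℕ × ℕ) : Continuous (trialLap t) := by
  have := continuous_trial
  have := continuous_trial''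
  unfold trialLap
  fun_prop

lemma trialProd_eq_sum {t : ℕ × ℕ} {N : ℕ} (h1 : t.1 + 2 < N) (h2 : t.2 + 2 < N) (p : ℝ × ℝ) :
    trialProd t p = ∑ s ∈ Finset.range N ×ˢ Finset.range N,
      trialCoeff t.1 s.1 * trialCoeff t.2 s.2 * cosMode (s.1, s.2) p := by
  rw [trialProd, trial_eq_sum h1, trial_eq_sum h2, Finset.sum_mul_sum, ← Finset.sum_product']
  refine Finset.sum_congr rfl fun s _ => ?_
  simp only [cosMode]
  ring

lemma trialLap_eq_sum {t : ℕ × ℕ} {N : ℕ} (h1 : t.1 + 2 < N) (h2 : t.2 + 2 < N) (p : ℝ × ℝ) :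
    trialLap t p = ∑ s ∈ Finset.range N ×ˢ Finset.range N,
      -(π ^ 2 * ((s.1 : ℝ) ^ 2 + (s.2 : ℝ) ^ 2)) * (trialCoeff t.1 s.1 * trialCoeff t.2 s.2)
        * cosMode (s.1, s.2) p := by
  rw [trialLap, trial_eq_sum h1, trial_eq_sum h2, trial''_eq_sum h1, trial''_eq_sum h2,
    Finset.sum_mul_sum, Finset.sum_mul_sum, ← Finset.sum_product', ← Finset.sum_product',
    ← Finset.sum_add_distrib]
  refine Finset.sum_congr rfl fun s _ => ?_
  simp only [cosMode]
  ring

lemma trialCoeff_eq_zero {m i : ℕ} (h : m + 2 < i) : trialCoeff m i = 0 := by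
  rw [trialCoeff, if_neg (by omega), if_neg (by omega)]
  simp

/-- The Rayleigh quotient bound for the trial space, before cutting off. -/
lemma integral_trialLap_le {k : ℕ} {r : ℝ} {t : Fin k → ℕ × ℕ}
    (ht : ∀ i, (((t i).1 : ℝ) + 2) ^ 2 + (((t i).2 : ℝ) + 2) ^ 2 ≤ r ^ 2) (c : Fin k → ℝ) :
    ∫ p in Rect 1, (∑ i, c i * trialLap (t i) p) ^ 2
      ≤ (π * r) ^ 4 * ∫ p in Rect 1, (∑ i, c i * trialProd (t i) p) ^ 2 := by
  set N := ∑ i, ((t i).1 + (t i).2) + 3 with hN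
  have hlt : ∀ i, (t i).1 + 2 < N ∧ (t i).2 + 2 < N := fun i => by
    have := Finset.single_le_sum (f := fun i => (t i).1 + (t i).2) (fun _ _ => Nat.zero_le _)
      (Finset.mem_univ i)
    omega
  set F := Finset.range N ×ˢ Finset.range N with hF
  set d : ℕ × ℕ → ℝ := fun s => ∑ i, c i * (trialCoeff (t i).1 s.1 * trialCoeff (t i).2 s.2) with hd
  have e1 : ∀ p, ∑ i, c i * trialProd (t i) p = ∑ s : F, d s * cosMode (s.1.1, s.1.2) p :=
    fun p => by
      rw [Finset.sum_coe_sort F fun s : ℕ × ℕ => d s * cosMode (s.1, s.2) p]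
      simp only [hd, Finset.sum_mul]
      rw [Finset.sum_comm]
      refine Finset.sum_congr rfl fun i _ => ?_
      rw [trialProd_eq_sum (hlt i).1 (hlt i).2, Finset.mul_sum]
      exact Finset.sum_congr rfl fun s _ => by ring
  have e2 : ∀ p, ∑ i, c i * trialLap (t i) p
      = ∑ s : F, (-(π ^ 2 * ((s.1.1 : ℝ) ^ 2 + (s.1.2 : ℝ) ^ 2)) * d s)
        * cosMode (s.1.1, s.1.2) p :=
    fun p => by
      rw [Finset.sum_coe_sort F fun s : ℕ × ℕ =>
        (-(π ^ 2 * ((s.1 : ℝ) ^ 2 + (s.2 : ℝ) ^ 2)) * d s) * cosMode (s.1, s.2) p]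
      simp only [hd, Finset.sum_mul, Finset.mul_sum]
      rw [Finset.sum_comm]
      refine Finset.sum_congr rfl fun i _ => ?_
      rw [trialLap_eq_sum (hlt i).1 (hlt i).2, Finset.mul_sum]
      exact Finset.sum_congr rfl fun s _ => by ring
  have hc : ∀ s, Continuous (cosMode s) := fun s => by unfold cosMode; fun_prop
  have hfi : ∀ s s' : F, Integrable (fun p => cosMode (s.1.1, s.1.2) p * cosMode (s'.1.1, s'.1.2) p)
      (volume.restrict (Rect 1)) := fun s s' => integrableOn_Rect_one ((hc _).mul (hc _))
  have hort : ∀ s s' : F, s ≠ s' →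
      ∫ p in Rect 1, cosMode (s.1.1, s.1.2) p * cosMode (s'.1.1, s'.1.2) p = 0 :=
    fun s s' hs => integral_cosMode_mul fun h => hs (Subtype.ext h)
  simp_rw [e1, e2]
  rw [integral_sq_sum_of_orthogonal hfi hort, integral_sq_sum_of_orthogonal hfi hort,
    Finset.mul_sum]
  refine Finset.sum_le_sum fun s _ => ?_
  have hI : 0 ≤ ∫ p in Rect 1, cosMode (s.1.1, s.1.2) p * cosMode (s.1.1, s.1.2) p :=
    integral_nonneg fun p => mul_self_nonneg _
  by_cases hds : d s = 0
  · simp [hds]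
  obtain ⟨i, -, hi⟩ := Finset.exists_ne_zero_of_sum_ne_zero hds
  have h1 : s.1.1 ≤ (t i).1 + 2 := by
    by_contra h
    exact hi (by rw [trialCoeff_eq_zero (lt_of_not_ge h)]; ring)
  have h2 : s.1.2 ≤ (t i).2 + 2 := by
    by_contra h
    exact hi (by rw [trialCoeff_eq_zero (i := s.1.2) (lt_of_not_ge h)]; ring)
  have h1' : (s.1.1 : ℝ) ≤ (t i).1 + 2 := by exact_mod_cast h1
  have h2' : (s.1.2 : ℝ) ≤ (t i).2 + 2 := by exact_mod_cast h2
  have h3 : (s.1.1 : ℝ) ^ 2 + (s.1.2 : ℝ) ^ 2 ≤ r ^ 2 := (ht i).trans' (by gcongr)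
  have h4 : ((s.1.1 : ℝ) ^ 2 + (s.1.2 : ℝ) ^ 2) ^ 2 ≤ (r ^ 2) ^ 2 := by gcongr
  have h5 := mul_le_mul_of_nonneg_right h4 (show 0 ≤ π ^ 4 * d s ^ 2
    * ∫ p in Rect 1, cosMode (s.1.1, s.1.2) p * cosMode (s.1.1, s.1.2) p by positivity)
  refine le_trans (le_of_eq ?_) (h5.trans (le_of_eq ?_)) <;> ring

lemma integral_trialProd_pos {k : ℕ} {t : Fin k → ℕ × ℕ} (ht : Function.Injective t)
    {c : Fin k → ℝ} (hc : c ≠ 0) : 0 < ∫ p in Rect 1, (∑ i, c i * trialProd (t i) p) ^ 2 := by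
  refine lt_of_le_of_ne (integral_nonneg fun p => sq_nonneg _) fun h => hc ?_
  have hcont : Continuous fun p => (∑ i, c i * trialProd (t i) p) ^ 2 := by
    have := fun i => continuous_trialProd (t i)
    fun_prop
  have h0 := (integral_eq_zero_iff_of_nonneg (fun p => sq_nonneg _)
    (integrableOn_Rect_one hcont)).1 h.symm
  set f : Fin k → ℝ × ℝ → ℝ := fun i p =>
    Real.sin ((((t i).1 : ℝ) + 1) * π * p.1) * Real.sin ((((t i).2 : ℝ) + 1) * π * p.2) with hf
  have hz : ∫ p in Rect 1, (∑ i, c i * f i p) ^ 2 = 0 := by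
    rw [integral_eq_zero_iff_of_nonneg_ae (ae_of_all _ fun p => sq_nonneg _)
      (integrableOn_Rect_one (by simp only [hf]; fun_prop))]
    filter_upwards [h0, ae_restrict_mem (measurableSet_Rect 1)] with p hp hpR
    rw [Rect_one] at hpR
    have hs : ∀ x ∈ Set.Ioo (0 : ℝ) 1, Real.sin (π * x) ≠ 0 := fun x hx =>
      (Real.sin_pos_of_pos_of_lt_pi (mul_pos Real.pi_pos hx.1)
        (by nlinarith [Real.pi_pos, hx.2])).ne'
    have e : ∑ i, c i * trialProd (t i) p
        = (Real.sin (π * p.1) * Real.sin (π * p.2)) * ∑ i, c i * f i p := by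
      rw [Finset.mul_sum]
      refine Finset.sum_congr rfl fun i _ => ?_
      simp only [trialProd, trial, hf]
      ring
    change (∑ i, c i * trialProd (t i) p) ^ 2 = 0 at hp
    change (∑ i, c i * f i p) ^ 2 = 0
    rw [e] at hp
    have h1 := (mul_eq_zero.1 (pow_eq_zero_iff (two_ne_zero) |>.1 hp)).resolve_left
      (mul_ne_zero (hs _ hpR.1) (hs _ hpR.2))
    rw [h1]
    simp
  have hprod : ∀ i j, ∫ p in Rect 1, f i p * f j p
      = (if (t i).1 = (t j).1 then 1 / 2 else 0) * (if (t i).2 = (t j).2 then 1 / 2 else 0) :=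
    fun i j => by
      have e : ∀ p, f i p * f j p = (Real.sin ((((t i).1 : ℝ) + 1) * π * p.1)
          * Real.sin ((((t j).1 : ℝ) + 1) * π * p.1)) * (Real.sin ((((t i).2 : ℝ) + 1) * π * p.2)
          * Real.sin ((((t j).2 : ℝ) + 1) * π * p.2)) := fun p => by
        simp only [hf]
        ring
      simp_rw [e]
      rw [integral_Rect_one_mul (fun x => Real.sin ((((t i).1 : ℝ) + 1) * π * x)
          * Real.sin ((((t j).1 : ℝ) + 1) * π * x)) (fun x => Real.sin ((((t i).2 : ℝ) + 1) * π * x)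
          * Real.sin ((((t j).2 : ℝ) + 1) * π * x)), integral_sin_mul_sin, integral_sin_mul_sin]
  rw [integral_sq_sum_of_orthogonal
    (fun i j => integrableOn_Rect_one (by simp only [hf]; fun_prop)) fun i j hij => by
      rw [hprod]
      by_cases h1 : (t i).1 = (t j).1
      · rw [if_neg (fun h2 => hij (ht (Prod.ext h1 h2))), mul_zero]
      · rw [if_neg h1, zero_mul]] at hz
  simp_rw [hprod] at hz
  simp only [if_true] at hz
  funext i
  have h2 := (Finset.sum_eq_zero_iff_of_nonneg fun i _ => by positivity).1 hz i (Finset.mem_univ i)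
  simpa using h2

lemma exists_cutoff : ∃ (q q' q'' : ℝ → ℝ) (M : ℝ), ContDiff ℝ (⊤ : ℕ∞) q ∧
    (∀ x, HasDerivAt q (q' x) x) ∧ (∀ x, HasDerivAt q' (q'' x) x) ∧
    (∀ x ≤ 1, q x = 0) ∧ (∀ x > 2, q x = 1 ∧ q' x = 0 ∧ q'' x = 0) ∧ (∀ x, |q x| ≤ 1) ∧ (∀ x, |x * q' x| ≤ M) ∧
    ∀ x, |x ^ 2 * q'' x| ≤ M := by
  set q : ℝ → ℝ := fun x => Real.smoothTransition (x - 1) with hq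
  have hsm : ContDiff ℝ (⊤ : ℕ∞) q := Real.smoothTransition.contDiff.comp (by fun_prop)
  have hsm' : ContDiff ℝ (⊤ : ℕ∞) (deriv q) := (contDiff_infty_iff_deriv.1 hsm).2
  have hsm'' : ContDiff ℝ (⊤ : ℕ∞) (deriv (deriv q)) := (contDiff_infty_iff_deriv.1 hsm').2
  have h0 : ∀ x ≤ 1, q x = 0 := fun x hx =>
    Real.smoothTransition.zero_of_nonpos (by linarith)
  have h1 : ∀ x > 2, q x = 1 := fun x hx => Real.smoothTransition.one_of_one_le (by linarith)
  have hd0 : ∀ x < 1, deriv q x = 0 := fun x hx => by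
    have : q =ᶠ[nhds x] fun _ => 0 := by
      filter_upwards [Iio_mem_nhds hx] with y hy using h0 y (le_of_lt hy)
    rw [this.deriv_eq]
    simp
  have hd1 : ∀ x > 2, deriv q x = 0 := fun x hx => by
    have : q =ᶠ[nhds x] fun _ => 1 := by
      filter_upwards [Ioi_mem_nhds hx] with y hy using h1 y hy
    rw [this.deriv_eq]
    simp
  have hdd0 : ∀ x < 1, deriv (deriv q) x = 0 := fun x hx => by
    have : deriv q =ᶠ[nhds x] fun _ => 0 := by
      filter_upwards [Iio_mem_nhds hx] with y hy using hd0 y hy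
    rw [this.deriv_eq]
    simp
  have hdd1 : ∀ x > 2, deriv (deriv q) x = 0 := fun x hx => by
    have : deriv q =ᶠ[nhds x] fun _ => 0 := by
      filter_upwards [Ioi_mem_nhds hx] with y hy using hd1 y hy
    rw [this.deriv_eq]
    simp
  have hbd : ∀ g : ℝ → ℝ, Continuous g → (∀ x < 1, g x = 0) → (∀ x > 2, g x = 0) →
      ∃ M, ∀ x, |g x| ≤ M := fun g hg hg0 hg1 => by
    have hs : HasCompactSupport g := HasCompactSupport.intro (isCompact_Icc (a := 1) (b := 2))
      fun x hx => by
        by_cases h : x < 1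
        · exact hg0 x h
        · exact hg1 x (lt_of_not_ge fun h' => hx ⟨not_lt.1 h, h'⟩)
    exact hs.exists_bound_of_continuous hg
  obtain ⟨M₁, hM₁⟩ := hbd (fun x => x * deriv q x) (continuous_id.mul hsm'.continuous)
    (fun x hx => by simp [hd0 x hx]) (fun x hx => by simp [hd1 x hx])
  obtain ⟨M₂, hM₂⟩ := hbd (fun x => x ^ 2 * deriv (deriv q) x)
    ((continuous_id.pow 2).mul hsm''.continuous)
    (fun x hx => by simp [hdd0 x hx]) (fun x hx => by simp [hdd1 x hx])
  refine ⟨q, deriv q, deriv (deriv q), max M₁ M₂, hsm,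
    fun x => ((hsm.differentiable (by simp)) x).hasDerivAt,
    fun x => ((hsm'.differentiable (by simp)) x).hasDerivAt, h0,
    fun x hx => ⟨h1 x hx, hd1 x hx, hdd1 x hx⟩, fun x => ?_,
    fun x => (hM₁ x).trans (le_max_left _ _), fun x => (hM₂ x).trans (le_max_right _ _)⟩
  rw [abs_of_nonneg (Real.smoothTransition.nonneg _)]
  exact Real.smoothTransition.le_one _

lemma abs_sin_natCast_mul_pi_one_sub (m : ℕ) (x : ℝ) :
    |Real.sin (m * π * (1 - x))| = |Real.sin (m * π * x)| := by
  rw [mul_sub, mul_one, Real.sin_sub, Real.sin_nat_mul_pi, zero_mul, zero_sub, abs_neg, abs_mul,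
    Real.cos_nat_mul_pi, abs_pow, abs_neg, abs_one, one_pow, one_mul]

lemma abs_sin_natCast_mul_pi_le (m : ℕ) (x : ℝ) :
    |Real.sin (m * π * x)| ≤ m * π * |x| ∧ |Real.sin (m * π * x)| ≤ m * π * |1 - x| := by
  have h : ∀ x : ℝ, |Real.sin (m * π * x)| ≤ m * π * |x| := fun x => by
    refine Real.abs_sin_le_abs.trans (le_of_eq ?_)
    rw [abs_mul, abs_of_nonneg (show 0 ≤ (m : ℝ) * π by positivity)]
  exact ⟨h x, abs_sin_natCast_mul_pi_one_sub m x ▸ h (1 - x)⟩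

lemma exists_trial_bound (m : ℕ) : ∃ C, 0 ≤ C ∧ ∀ x,
    (|trial m x| ≤ C ∧ |trial m x| ≤ C * |x| ^ 2 ∧ |trial m x| ≤ C * |1 - x| ^ 2 ∧
      |trial m x| ≤ C * (|x| * |1 - x|)) ∧
    (|trial' m x| ≤ C * |x| ∧ |trial' m x| ≤ C * |1 - x|) ∧ |trial'' m x| ≤ C := by
  set M : ℝ := (m : ℝ) + 1 with hM
  have hM1 : 1 ≤ M := by rw [hM]; linarith [(Nat.cast_nonneg m : (0 : ℝ) ≤ m)]
  have hπ := Real.two_le_pi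
  have hC : 0 ≤ 4 * M ^ 2 * π ^ 2 := by positivity
  refine ⟨4 * M ^ 2 * π ^ 2, hC, fun x => ?_⟩
  obtain ⟨a0, a1⟩ := abs_sin_natCast_mul_pi_le 1 x
  obtain ⟨b0, b1⟩ := abs_sin_natCast_mul_pi_le (m + 1) x
  push_cast at a0 a1 b0 b1
  rw [one_mul] at a0 a1
  rw [← hM] at b0 b1
  have ha := Real.abs_sin_le_one (π * x)
  have hb := Real.abs_sin_le_one (M * π * x)
  have hca := Real.abs_cos_le_one (π * x)
  have hcb := Real.abs_cos_le_one (M * π * x)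
  have hx := abs_nonneg x
  have hy := abs_nonneg (1 - x)
  have hv : |trial m x| = |Real.sin (π * x)| * |Real.sin (M * π * x)| := abs_mul _ _
  have hMM : M ≤ M ^ 2 := by nlinarith
  have hππ : 1 ≤ π ^ 2 := by nlinarith
  have hM2 : 1 ≤ M ^ 2 := by nlinarith
  have hv1 : |trial m x| ≤ 1 := by
    rw [hv]
    exact mul_le_one₀ ha (abs_nonneg _) hb
  have h4 : M * π ^ 2 ≤ 4 * M ^ 2 * π ^ 2 := by nlinarith [sq_nonneg π]
  have hC1 : 1 ≤ 4 * M ^ 2 * π ^ 2 := by nlinarith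
  have hd : ∀ z : ℝ, 0 ≤ z → |Real.sin (π * x)| ≤ π * z → |Real.sin (M * π * x)| ≤ M * π * z →
      |trial' m x| ≤ 4 * M ^ 2 * π ^ 2 * z := fun z hz h1 h2 => by
    calc |trial' m x| ≤ |π * Real.cos (π * x) * Real.sin (M * π * x)|
          + |Real.sin (π * x) * (M * π * Real.cos (M * π * x))| := abs_add_le _ _
      _ = π * (|Real.cos (π * x)| * |Real.sin (M * π * x)|)
          + M * π * (|Real.sin (π * x)| * |Real.cos (M * π * x)|) := by
          simp only [abs_mul, abs_of_pos Real.pi_pos, abs_of_nonneg (zero_le_one.trans hM1)]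
          ring
      _ ≤ π * (1 * (M * π * z)) + M * π * (π * z * 1) := by gcongr
      _ = 2 * (M * π ^ 2) * z := by ring
      _ ≤ 4 * M ^ 2 * π ^ 2 * z := mul_le_mul_of_nonneg_right (by nlinarith [sq_nonneg π]) hz
  refine ⟨⟨hv1.trans hC1, ?_, ?_, ?_⟩, ⟨hd _ hx a0 b0, hd _ hy a1 b1⟩, ?_⟩
  · calc |trial m x| ≤ (π * |x|) * (M * π * |x|) := by rw [hv]; gcongr
      _ = M * π ^ 2 * |x| ^ 2 := by ring
      _ ≤ _ := by gcongr
  · calc |trial m x| ≤ (π * |1 - x|) * (M * π * |1 - x|) := by rw [hv]; gcongr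
      _ = M * π ^ 2 * |1 - x| ^ 2 := by ring
      _ ≤ _ := by gcongr
  · calc |trial m x| ≤ (π * |x|) * (M * π * |1 - x|) := by rw [hv]; gcongr
      _ = M * π ^ 2 * (|x| * |1 - x|) := by ring
      _ ≤ _ := by gcongr
  · calc |trial'' m x| ≤ |2 * (M * π ^ 2 * Real.cos (π * x) * Real.cos (M * π * x))|
          + |(1 + M ^ 2) * π ^ 2 * trial m x| := abs_sub _ _
      _ = 2 * (M * π ^ 2 * |Real.cos (π * x)| * |Real.cos (M * π * x)|)
          + (1 + M ^ 2) * π ^ 2 * |trial m x| := by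
          simp only [abs_mul, abs_of_pos Real.pi_pos, abs_of_nonneg (zero_le_one.trans hM1),
            abs_pow, abs_two, abs_of_nonneg (show 0 ≤ 1 + M ^ 2 by positivity)]
      _ ≤ 2 * (M * π ^ 2 * 1 * 1) + (1 + M ^ 2) * π ^ 2 * 1 := by gcongr
      _ = (2 * M + 1 + M ^ 2) * π ^ 2 := by ring
      _ ≤ 4 * M ^ 2 * π ^ 2 := by
          gcongr
          nlinarith

/-- Compactly supported approximations of the trial profiles, bounded up to two derivatives. -/
lemma exists_trial_approx (m : ℕ) : ∃ (w w' w'' : ℕ → ℝ → ℝ) (K : ℝ),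
    (∀ l, ContDiff ℝ (⊤ : ℕ∞) (w l)) ∧ (∀ l x, HasDerivAt (w l) (w' l x) x) ∧
    (∀ l x, HasDerivAt (w' l) (w'' l x) x) ∧
    (∀ l, ∃ δ > 0, ∀ x ∉ Set.Icc δ (1 - δ), w l x = 0) ∧
    (∀ l x, |w l x| ≤ K) ∧ (∀ l x, |w'' l x| ≤ K) ∧
    ∀ x ∈ Set.Ioo (0 : ℝ) 1, ∀ᶠ l in atTop, w l x = trial m x ∧ w'' l x = trial'' m x := by
  obtain ⟨q, q', q'', M, hq, hq', hq'', h0, h2, hb, hb', hb''⟩ := exists_cutoff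
  obtain ⟨C, hC, hCb⟩ := exists_trial_bound m
  have hM : 0 ≤ M := (abs_nonneg _).trans (hb' 0)
  set N : ℕ → ℝ := fun l => (l : ℝ) + 1 with hl
  have hlpos : ∀ l, 0 < N l := fun l => by positivity
  have hL : ∀ l x, HasDerivAt (fun x => N l * x) (N l) x := fun l x => by
    simpa using (hasDerivAt_id x).const_mul (N l)
  have hR : ∀ l x, HasDerivAt (fun x => N l * (1 - x)) (-N l) x := fun l x => by
    simpa using ((hasDerivAt_id x).const_sub 1).const_mul (N l)
  set p : ℕ → ℝ → ℝ := fun l x => q (N l * x) * q (N l * (1 - x)) with hp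
  set p' : ℕ → ℝ → ℝ := fun l x => q' (N l * x) * N l * q (N l * (1 - x))
    + q (N l * x) * (q' (N l * (1 - x)) * -N l) with hp'
  set p'' : ℕ → ℝ → ℝ := fun l x => q'' (N l * x) * N l * N l * q (N l * (1 - x))
    + q' (N l * x) * N l * (q' (N l * (1 - x)) * -N l)
    + (q' (N l * x) * N l * (q' (N l * (1 - x)) * -N l)
    + q (N l * x) * (q'' (N l * (1 - x)) * -N l * -N l)) with hp''
  have hpd : ∀ l x, HasDerivAt (p l) (p' l x) x := fun l x =>
    ((hq' _).comp x (hL l x)).mul ((hq' _).comp x (hR l x))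
  have hpd' : ∀ l x, HasDerivAt (p' l) (p'' l x) x := fun l x =>
    ((((hq'' _).comp x (hL l x)).mul_const _).mul ((hq' _).comp x (hR l x))).add
      (((hq' _).comp x (hL l x)).mul (((hq'' _).comp x (hR l x)).mul_const _))
  refine ⟨fun l x => p l x * trial m x, fun l x => p' l x * trial m x + p l x * trial' m x,
    fun l x => p'' l x * trial m x + p' l x * trial' m x
      + (p' l x * trial' m x + p l x * trial'' m x),
    2 * C * M + 2 * C * M ^ 2 + 4 * C * M + C, ?_, ?_, ?_, ?_, ?_, ?_, ?_⟩
  · intro l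
    simp only [hp, trial]
    fun_prop
  · exact fun l x => (hpd l x).mul (hasDerivAt_trial m x)
  · exact fun l x => ((hpd' l x).mul (hasDerivAt_trial m x)).add
      ((hpd l x).mul (hasDerivAt_trial' m x))
  · intro l
    refine ⟨1 / N l, by have := hlpos l; positivity, fun x hx => ?_⟩
    have hor : N l * x ≤ 1 ∨ N l * (1 - x) ≤ 1 := by
      by_contra! h
      have e : N l * (1 / N l) = 1 := mul_one_div_cancel (hlpos l).ne'
      refine hx ⟨?_, ?_⟩
      · exact le_of_lt (lt_of_mul_lt_mul_left (by linarith [h.1]) (hlpos l).le)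
      · have : 1 / N l ≤ 1 - x :=
          le_of_lt (lt_of_mul_lt_mul_left (by linarith [h.2]) (hlpos l).le)
        linarith
    rcases hor with h | h <;> simp [hp, h0 _ h]
  · intro l x
    have h1 : |p l x| ≤ 1 := by
      rw [hp]
      simp only [abs_mul]
      exact mul_le_one₀ (hb _) (abs_nonneg _) (hb _)
    rw [abs_mul]
    calc |p l x| * |trial m x| ≤ 1 * C := by
          gcongr
          exact (hCb x).1.1
      _ ≤ _ := by nlinarith [mul_nonneg hC hM, mul_nonneg hC (sq_nonneg M)]
  · intro l x
    obtain ⟨⟨c1, c2, c3, c4⟩, ⟨c5, c6⟩, c7⟩ := hCb x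
    have hn := (hlpos l).le
    set n := N l with hnl
    have f1 : |q'' (n * x) * n * n * trial m x| ≤ C * M := by
      rw [abs_mul]
      calc _ ≤ |q'' (n * x) * n * n| * (C * |x| ^ 2) := by gcongr
        _ = C * |(n * x) ^ 2 * q'' (n * x)| := by simp only [abs_mul, abs_pow]; ring
        _ ≤ C * M := by gcongr; exact hb'' _
    have f2 : |q'' (n * (1 - x)) * n * n * trial m x| ≤ C * M := by
      rw [abs_mul]
      calc _ ≤ |q'' (n * (1 - x)) * n * n| * (C * |1 - x| ^ 2) := by gcongr
        _ = C * |(n * (1 - x)) ^ 2 * q'' (n * (1 - x))| := by simp only [abs_mul, abs_pow]; ring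
        _ ≤ C * M := by gcongr; exact hb'' _
    have f3 : |q' (n * x) * n * (q' (n * (1 - x)) * n) * trial m x| ≤ C * M ^ 2 := by
      rw [abs_mul]
      calc _ ≤ |q' (n * x) * n * (q' (n * (1 - x)) * n)| * (C * (|x| * |1 - x|)) := by gcongr
        _ = C * (|n * x * q' (n * x)| * |n * (1 - x) * q' (n * (1 - x))|) := by
            simp only [abs_mul]; ring
        _ ≤ C * (M * M) := by gcongr <;> exact hb' _
        _ = C * M ^ 2 := by ring
    have f4 : |q' (n * x) * n * trial' m x| ≤ C * M := by
      rw [abs_mul]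
      calc _ ≤ |q' (n * x) * n| * (C * |x|) := by gcongr
        _ = C * |n * x * q' (n * x)| := by simp only [abs_mul]; ring
        _ ≤ C * M := by gcongr; exact hb' _
    have f5 : |q' (n * (1 - x)) * n * trial' m x| ≤ C * M := by
      rw [abs_mul]
      calc _ ≤ |q' (n * (1 - x)) * n| * (C * |1 - x|) := by gcongr
        _ = C * |n * (1 - x) * q' (n * (1 - x))| := by simp only [abs_mul]; ring
        _ ≤ C * M := by gcongr; exact hb' _
    have g : ∀ y z B : ℝ, |z| ≤ B → |q y * z| ≤ B := fun y z B hz => by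
      rw [abs_mul]
      exact (mul_le_of_le_one_left (abs_nonneg _) (hb y)).trans hz
    have g1 := abs_le.1 (g (n * (1 - x)) _ _ f1)
    have g2 := abs_le.1 (g (n * x) _ _ f2)
    have g3 := abs_le.1 f3
    have g4 := abs_le.1 (g (n * (1 - x)) _ _ f4)
    have g5 := abs_le.1 (g (n * x) _ _ f5)
    have g6 := abs_le.1 (g (n * x) _ _ (g (n * (1 - x)) _ _ c7))
    have e : p'' l x * trial m x + p' l x * trial' m x + (p' l x * trial' m x + p l x * trial'' m x)
        = q (n * (1 - x)) * (q'' (n * x) * n * n * trial m x)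
          + q (n * x) * (q'' (n * (1 - x)) * n * n * trial m x)
          - 2 * (q' (n * x) * n * (q' (n * (1 - x)) * n) * trial m x)
          + 2 * (q (n * (1 - x)) * (q' (n * x) * n * trial' m x))
          - 2 * (q (n * x) * (q' (n * (1 - x)) * n * trial' m x))
          + q (n * x) * (q (n * (1 - x)) * trial'' m x) := by
      simp only [hp, hp', hp'', ← hnl]
      ring
    beta_reduce
    rw [e, abs_le]
    constructor <;> linarith
  · intro x hx
    have hx1 : 0 < 1 - x := by linarith [hx.2]
    have ht : Tendsto N atTop atTop :=
      tendsto_atTop_add_const_right _ _ tendsto_natCast_atTop_atTop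
    filter_upwards [(ht.atTop_mul_const hx.1).eventually_gt_atTop 2,
      (ht.atTop_mul_const hx1).eventually_gt_atTop 2] with l hl1 hl2
    simp [hp, hp', hp'', h2 _ hl1, h2 _ hl2]

lemma exists_trialProd_approx : ∃ (u : ℕ → ℕ × ℕ → ℝ × ℝ → ℝ) (K : ℕ × ℕ → ℝ),
    (∀ l t, Adm (Rect 1) (u l t)) ∧ (∀ l t p, |u l t p| ≤ K t) ∧ (∀ l t p, |lap (u l t) p| ≤ K t) ∧
    ∀ t, ∀ p ∈ Rect 1, ∀ᶠ l in atTop, u l t p = trialProd t p ∧ lap (u l t) p = trialLap t p := by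
  choose w w' w'' K hw hw' hw'' hδ hK hK'' hev using exists_trial_approx
  have hK0 : ∀ m, 0 ≤ K m := fun m => (abs_nonneg _).trans (hK m 0 0)
  have hlap : ∀ l (t : ℕ × ℕ), lap (fun p => w t.1 l p.1 * w t.2 l p.2)
      = fun p => w'' t.1 l p.1 * w t.2 l p.2 + w t.1 l p.1 * w'' t.2 l p.2 := fun l t =>
    lap_tensor (hw' _ _) (hw'' _ _) (hw' _ _) (hw'' _ _)
  refine ⟨fun l t p => w t.1 l p.1 * w t.2 l p.2, fun t => 2 * (K t.1 * K t.2), fun l t => ?_,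
    fun l t p => ?_, fun l t p => ?_, fun t p hp => ?_⟩
  · obtain ⟨δ₁, h1, hz1⟩ := hδ t.1 l
    obtain ⟨δ₂, h2, hz2⟩ := hδ t.2 l
    have hz : ∀ p ∉ Set.Icc δ₁ (1 - δ₁) ×ˢ Set.Icc δ₂ (1 - δ₂),
        w t.1 l p.1 * w t.2 l p.2 = 0 := fun p hp => by
      by_cases h : p.1 ∈ Set.Icc δ₁ (1 - δ₁)
      · rw [hz2 _ fun h' => hp ⟨h, h'⟩, mul_zero]
      · rw [hz1 _ h, zero_mul]
    have hcpt : IsCompact (Set.Icc δ₁ (1 - δ₁) ×ˢ Set.Icc δ₂ (1 - δ₂)) :=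
      isCompact_Icc.prod isCompact_Icc
    refine ⟨((hw _ l).comp contDiff_fst).mul ((hw _ l).comp contDiff_snd),
      HasCompactSupport.intro hcpt hz, ?_⟩
    have hcl : tsupport (fun p : ℝ × ℝ => w t.1 l p.1 * w t.2 l p.2)
        ⊆ Set.Icc δ₁ (1 - δ₁) ×ˢ Set.Icc δ₂ (1 - δ₂) :=
      closure_minimal (fun p hp => by_contra fun h => hp (hz p h)) hcpt.isClosed
    refine hcl.trans ?_
    rw [Rect_one]
    refine Set.prod_mono ?_ ?_ <;> intro x hx <;>
      exact ⟨by linarith [hx.1], by linarith [hx.2]⟩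
  · rw [abs_mul]
    have h := mul_le_mul (hK t.1 l p.1) (hK t.2 l p.2) (abs_nonneg _) (hK0 _)
    nlinarith [mul_nonneg (hK0 t.1) (hK0 t.2)]
  · rw [hlap]
    refine (abs_add_le _ _).trans ?_
    rw [abs_mul, abs_mul]
    have h := mul_le_mul (hK'' t.1 l p.1) (hK t.2 l p.2) (abs_nonneg _) (hK0 _)
    have h' := mul_le_mul (hK t.1 l p.1) (hK'' t.2 l p.2) (abs_nonneg _) (hK0 _)
    linarith
  · rw [Rect_one] at hp
    filter_upwards [hev t.1 p.1 hp.1, hev t.2 p.2 hp.2] with l h1 h2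
    rw [hlap]
    simp only [h1.1, h1.2, h2.1, h2.2, trialProd, trialLap, and_self]

lemma tendsto_integral_mul_Rect_one {f g : ℕ → ℝ × ℝ → ℝ} {f₀ g₀ : ℝ × ℝ → ℝ} {K L : ℝ}
    (hf : ∀ l, Adm (Rect 1) (f l)) (hg : ∀ l, Adm (Rect 1) (g l)) (hK : ∀ l p, |f l p| ≤ K)
    (hL : ∀ l p, |g l p| ≤ L) (hf₀ : ∀ p ∈ Rect 1, ∀ᶠ l in atTop, f l p = f₀ p)
    (hg₀ : ∀ p ∈ Rect 1, ∀ᶠ l in atTop, g l p = g₀ p) :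
    Tendsto (fun l => ∫ p, f l p * g l p) atTop (nhds (∫ p in Rect 1, f₀ p * g₀ p)) := by
  have e : ∀ l, ∫ p, f l p * g l p = ∫ p in Rect 1, f l p * g l p := fun l =>
    (setIntegral_eq_integral_of_forall_compl_eq_zero fun p hp => by
      rw [(hf l).eq_zero hp, zero_mul]).symm
  simp_rw [e]
  refine tendsto_integral_of_dominated_convergence (fun _ => K * L) (fun l => ?_)
    (integrableOn_Rect_one continuous_const) (fun l => ae_of_all _ fun p => ?_) ?_
  · exact ((hf l).continuous.mul (hg l).continuous).aestronglyMeasurable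
  · rw [Real.norm_eq_abs, abs_mul]
    exact mul_le_mul (hK l p) (hL l p) (abs_nonneg _) ((abs_nonneg _).trans (hK l p))
  · filter_upwards [ae_restrict_mem (measurableSet_Rect 1)] with p hp
    refine tendsto_const_nhds.congr' ?_
    filter_upwards [hf₀ p hp, hg₀ p hp] with l h1 h2
    rw [h1, h2]

lemma eventually_form_pos {ι : Type*} [Fintype ι] {G : ℕ → ι → ι → ℝ} {G₀ : ι → ι → ℝ}
    (h : ∀ i j, Tendsto (fun l => G l i j) atTop (nhds (G₀ i j)))
    (h₀ : ∀ c : ι → ℝ, c ≠ 0 → 0 < ∑ i, ∑ j, c i * c j * G₀ i j) :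
    ∀ᶠ l in atTop, ∀ c : ι → ℝ, c ≠ 0 → 0 < ∑ i, ∑ j, c i * c j * G l i j := by
  obtain ⟨β, hβ, hb⟩ := exists_coercive G₀ h₀
  have ht : Tendsto (fun l => ∑ i, ∑ j, |G₀ i j - G l i j|) atTop (nhds 0) := by
    have := tendsto_finsetSum Finset.univ fun i _ => tendsto_finsetSum Finset.univ fun j _ =>
      ((h i j).const_sub (G₀ i j)).abs
    simpa using this
  filter_upwards [ht.eventually_lt_const hβ] with l hl c hc
  have h1 := sum_sum_mul_le (fun i j => G₀ i j - G l i j) c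
  simp only [mul_sub, Finset.sum_sub_distrib] at h1
  have h2 := hb c
  have h3 : 0 < ∑ i, c i ^ 2 := by
    obtain ⟨i, hi⟩ := Function.ne_iff.1 hc
    exact Finset.sum_pos' (fun _ _ => sq_nonneg _) ⟨i, Finset.mem_univ i, by
      have : c i ≠ 0 := hi
      positivity⟩
  nlinarith [mul_lt_mul_of_pos_right hl h3]

lemma lamk_le_of_forall {k : ℕ} {a Λ : ℝ} (hΛ : 0 ≤ Λ) {u : Fin k → ℝ × ℝ → ℝ}
    (h : ∀ i, Adm (Rect a) (u i))
    (hpos : ∀ c : Fin k → ℝ, c ≠ 0 → 0 < ∫ p, (∑ i, c i * u i p) ^ 2)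
    (hle : ∀ c : Fin k → ℝ, c ≠ 0 →
      ∫ p, (∑ i, c i * lap (u i) p) ^ 2 ≤ Λ * ∫ p, (∑ i, c i * u i p) ^ 2) : lamk k a ≤ Λ := by
  have hu : LinearIndependent ℝ u := by
    rw [Fintype.linearIndependent_iff]
    intro c hc
    by_contra! hne
    obtain ⟨i, hi⟩ := hne
    have h1 := hpos c fun h0 => hi (congrFun h0 i)
    have h2 : ∀ p, ∑ i, c i * u i p = 0 := fun p => by
      have := congrFun hc p
      simpa using this
    simp [h2] at h1
  unfold lamk
  refine csInf_le_of_le (b := sSup (rayleighSet u)) ⟨0, ?_⟩ ⟨u, h, hu, rfl⟩ (Real.sSup_le ?_ hΛ)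
  · rintro _ ⟨v, -, -, rfl⟩
    apply Real.sSup_nonneg
    rintro _ ⟨c, -, rfl⟩
    positivity
  · rintro _ ⟨c, hc, rfl⟩
    rw [div_le_iff₀ (hpos c hc), lap_sum _ h]
    exact hle c hc

lemma lamk_one_le {r : ℝ} (I : Finset (ℕ × ℕ))
    (hI : ∀ p ∈ I, ((p.1 : ℝ) + 2) ^ 2 + ((p.2 : ℝ) + 2) ^ 2 ≤ r ^ 2) {k : ℕ}
    (hk : k ≤ I.card) : lamk k 1 ≤ (π * r) ^ 4 := by
  obtain ⟨t, ht, htI⟩ : ∃ t : Fin k → ℕ × ℕ, Function.Injective t ∧ ∀ i, t i ∈ I :=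
    ⟨fun i => I.equivFin.symm (Fin.castLE hk i), fun i j hij => by
      simpa using hij, fun i => (I.equivFin.symm (Fin.castLE hk i)).2⟩
  obtain ⟨u, K, hu, hK, hK', hev⟩ := exists_trialProd_approx
  refine le_of_forall_pos_le_add fun ε hε => ?_
  set Λ := (π * r) ^ 4 with hΛ
  have hΛ0 : 0 ≤ Λ := by positivity
  have hB : ∀ i j, Tendsto (fun l => ∫ p, u l (t i) p * u l (t j) p) atTop
      (nhds (∫ p in Rect 1, trialProd (t i) p * trialProd (t j) p)) := fun i j =>
    tendsto_integral_mul_Rect_one (fun l => hu l _) (fun l => hu l _) (fun l => hK l _)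
      (fun l => hK l _) (fun p hp => (hev _ p hp).mono fun _ h => h.1)
      (fun p hp => (hev _ p hp).mono fun _ h => h.1)
  have hA : ∀ i j, Tendsto (fun l => ∫ p, lap (u l (t i)) p * lap (u l (t j)) p) atTop
      (nhds (∫ p in Rect 1, trialLap (t i) p * trialLap (t j) p)) := fun i j =>
    tendsto_integral_mul_Rect_one (fun l => (hu l _).lap) (fun l => (hu l _).lap)
      (fun l => hK' l _) (fun l => hK' l _) (fun p hp => (hev _ p hp).mono fun _ h => h.2)
      (fun p hp => (hev _ p hp).mono fun _ h => h.2)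
  have hB₀ : ∀ c : Fin k → ℝ, ∫ p in Rect 1, (∑ i, c i * trialProd (t i) p) ^ 2
      = ∑ i, ∑ j, c i * c j * ∫ p in Rect 1, trialProd (t i) p * trialProd (t j) p :=
    integral_sq_sum fun i j =>
      integrableOn_Rect_one ((continuous_trialProd _).mul (continuous_trialProd _))
  have hA₀ : ∀ c : Fin k → ℝ, ∫ p in Rect 1, (∑ i, c i * trialLap (t i) p) ^ 2
      = ∑ i, ∑ j, c i * c j * ∫ p in Rect 1, trialLap (t i) p * trialLap (t j) p :=
    integral_sq_sum fun i j =>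
      integrableOn_Rect_one ((continuous_trialLap _).mul (continuous_trialLap _))
  have hsplit : ∀ (c : Fin k → ℝ) (A B : Fin k → Fin k → ℝ),
      ∑ i, ∑ j, c i * c j * ((Λ + ε) * B i j - A i j)
        = (Λ + ε) * ∑ i, ∑ j, c i * c j * B i j - ∑ i, ∑ j, c i * c j * A i j := fun c A B => by
    simp only [Finset.mul_sum, ← Finset.sum_sub_distrib]
    exact Finset.sum_congr rfl fun i _ => Finset.sum_congr rfl fun j _ => by ring
  have h1 := eventually_form_pos hB fun c hc => by
    rw [← hB₀]
    exact integral_trialProd_pos ht hc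
  have h2 := eventually_form_pos (fun i j => ((hB i j).const_mul (Λ + ε)).sub (hA i j))
    fun c hc => by
      rw [hsplit, ← hA₀, ← hB₀]
      have := integral_trialLap_le (fun i => hI _ (htI i)) c
      nlinarith [mul_pos hε (integral_trialProd_pos ht hc)]
  obtain ⟨l, hl1, hl2⟩ := (h1.and h2).exists
  have hBl : ∀ c : Fin k → ℝ, ∫ p, (∑ i, c i * u l (t i) p) ^ 2
      = ∑ i, ∑ j, c i * c j * ∫ p, u l (t i) p * u l (t j) p :=
    integral_sq_sum fun i j => (hu l _).integrable_mul (hu l _).continuous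
  have hAl : ∀ c : Fin k → ℝ, ∫ p, (∑ i, c i * lap (u l (t i)) p) ^ 2
      = ∑ i, ∑ j, c i * c j * ∫ p, lap (u l (t i)) p * lap (u l (t j)) p :=
    integral_sq_sum fun i j => (hu l _).lap.integrable_mul (hu l _).lap.continuous
  refine lamk_le_of_forall (by positivity) (fun i => hu l (t i)) (fun c hc => ?_) fun c hc => ?_
  · rw [hBl]
    exact hl1 c hc
  · have h3 := hl2 c hc
    rw [hsplit, ← hBl, ← hAl] at h3
    linarith

lemma eventually_minimiser_le (a : ℕ → ℝ)
    (ha : ∀ k : ℕ, 1 ≤ a k ∧ ∀ b : ℝ, 1 ≤ b → lamk (k + 1) (a k) ≤ lamk (k + 1) b) :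
    ∀ᶠ k in atTop, a k ≤ 7.1 := by
  filter_upwards [eventually_ge_atTop (10 ^ 13)] with k hk
  by_contra! hlt
  have hK : (10 : ℝ) ^ 13 ≤ ((k + 1 : ℕ) : ℝ) := by exact_mod_cast hk.trans (Nat.le_succ k)
  obtain ⟨r, hr, hrK⟩ := exists_radius hK
  obtain ⟨I, hIcard, hI⟩ := exists_trial_finset (r := r) (by linarith)
  obtain ⟨E, hEcard, hE⟩ := exists_lowFrequency_finset (a := a k) (R := r + 0.001)
    (by linarith) (by linarith)
  have h1 : lamk (k + 1) 1 ≤ (π * r) ^ 4 := by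
    apply lamk_one_le I hI
    have : ((k + 1 : ℕ) : ℝ) ≤ I.card := by linarith [trial_bound (r := r) (by linarith)]
    exact_mod_cast this
  have h2 : (π * (r + 0.001)) ^ 4 ≤ lamk (k + 1) (a k) := by
    apply le_lamk (by linarith) E hE
    have h3 := hEcard.trans (card_bound (R := r + 0.001) hlt.le (by linarith))
    have : (E.card : ℝ) < ((k + 1 : ℕ) : ℝ) := by
      apply h3.trans_lt (max_lt (by positivity) _)
      have := Real.pi_lt_d2
      rw [← hrK]
      nlinarith
    exact_mod_cast this
  have h3 := (ha k).2 1 le_rfl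
  have h4 : (π * r) ^ 4 < (π * (r + 0.001)) ^ 4 := by
    have := Real.pi_pos
    gcongr
    linarith
  linarith

/-- Any sequence of minimisers of `λ_k` over rectangles of unit area has
`limsup ≤ (6√3/(3√3 − 2√2))·(1 + Γ(3/4)/(√π·Γ(5/4)))`; in particular it is
bounded. -/
theorem minimiser_sequence_bounded (a : ℕ → ℝ)
    (ha : ∀ k : ℕ, 1 ≤ a k ∧ ∀ b : ℝ, 1 ≤ b → lamk (k + 1) (a k) ≤ lamk (k + 1) b) :
    Filter.limsup a Filter.atTop ≤
      (6 * Real.sqrt 3 / (3 * Real.sqrt 3 - 2 * Real.sqrt 2)) *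
        (1 + Real.Gamma (3 / 4) / (Real.sqrt π * Real.Gamma (5 / 4))) ∧
    ∃ M : ℝ, ∀ k : ℕ, a k ≤ M := by
  have h := eventually_minimiser_le a ha
  constructor
  · refine le_trans (Filter.limsup_le_of_le ?_ h) const_bound
    exact Filter.IsBoundedUnder.isCoboundedUnder_le
      (Filter.isBoundedUnder_of ⟨1, fun k => (ha k).1⟩)
  · obtain ⟨M, hM⟩ := Filter.IsBoundedUnder.bddAbove_range (f := a) ⟨7.1, h⟩
    exact ⟨M, fun k => hM ⟨k, rfl⟩⟩
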